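/- arXiv:2202.00586 — 4 statements merged into one kernel-verified Lean document; each statement's English description precedes it below -/
import Mathlib

section
/- For all s > 0 and c > 0, the large-n limit of E[h_{n/2}²(‖√s Z‖ c√n / s)], where Z ~ N(0, I_n), equals c²/((√s/2 + sqrt(s/4 + c²))²). -/
open MeasureTheory ProbabilityTheory Filter

/-- Modified Bessel function of the first kind of order `ν`. -/
noncomputable def besselI (ν x : ℝ) : ℝ :=
  ∑' k : ℕ, (x / 2) ^ (2 * (k : ℝ) + ν) / (k.factorial * Real.Gamma ((k : ℝ) + ν + 1))

/-- Ratio `h_ν(x) = I_ν(x) / I_{ν-1}(x)`. -/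
noncomputable def besselRatio (ν x : ℝ) : ℝ := besselI ν x / besselI (ν - 1) x

/-- Standard Gaussian measure on `ℝⁿ`. -/
noncomputable def stdGaussian (n : ℕ) : Measure (Fin n → ℝ) :=
  Measure.pi fun _ => gaussianReal 0 1

/-- Euclidean norm on `Fin n → ℝ`. -/
noncomputable def euclNorm {n : ℕ} (z : Fin n → ℝ) : ℝ := Real.sqrt (∑ i, z i ^ 2)


noncomputable def bT (y ν : ℝ) (k : ℕ) : ℝ := y ^ k / (k.factorial * Real.Gamma ((k : ℝ) + ν))

noncomputable def bS (y ν : ℝ) : ℝ := ∑' k, bT y ν k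

lemma gamma_pos' (ν : ℝ) (hν : 1 ≤ ν) (k : ℕ) : 0 < Real.Gamma ((k : ℝ) + ν) :=
  Real.Gamma_pos_of_pos (by positivity)

lemma bT_nonneg {y ν : ℝ} (hy : 0 ≤ y) (hν : 1 ≤ ν) (k : ℕ) : 0 ≤ bT y ν k := by
  have := gamma_pos' ν hν k
  unfold bT; positivity

lemma gamma_ge (ν : ℝ) (hν : 1 ≤ ν) (k : ℕ) : Real.Gamma ν ≤ Real.Gamma ((k : ℝ) + ν) := by
  induction k with
  | zero => simp
  | succ k ih =>
    have h0 := gamma_pos' ν hν k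
    have : ((k + 1 : ℕ) : ℝ) + ν = (k + ν) + 1 := by push_cast; ring
    rw [this, Real.Gamma_add_one (by positivity)]
    have hk : (0 : ℝ) ≤ k := by positivity
    nlinarith

lemma bT_summable {y ν : ℝ} (hy : 0 ≤ y) (hν : 1 ≤ ν) : Summable (bT y ν) := by
  have hg : 0 < Real.Gamma ν := Real.Gamma_pos_of_pos (by linarith)
  refine Summable.of_nonneg_of_le (bT_nonneg hy hν) (fun k => ?_)
    ((Real.summable_pow_div_factorial y).mul_left (1 / Real.Gamma ν))
  unfold bT
  have h1 := gamma_ge ν hν k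
  rw [div_mul_div_comm, one_mul, mul_comm (Real.Gamma ν)]
  gcongr

lemma bS_pos {y ν : ℝ} (hy : 0 < y) (hν : 1 ≤ ν) : 0 < bS y ν := by
  refine (bT_summable hy.le hν).tsum_pos (bT_nonneg hy.le hν) 0 ?_
  have := gamma_pos' ν hν 0
  unfold bT; positivity

lemma bT_succ_nu {y ν : ℝ} (hν : 1 ≤ ν) (k : ℕ) :
    ((k : ℝ) + ν) * bT y (ν + 1) k = bT y ν k := by
  have h0 := gamma_pos' ν hν k
  have hk : 0 < (k : ℝ) + ν := by positivity
  unfold bT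
  rw [← add_assoc, Real.Gamma_add_one hk.ne']
  field_simp

lemma bT_succ_k {y ν : ℝ} (hν : 1 ≤ ν) (k : ℕ) :
    ((k : ℝ) + 1) * bT y ν (k + 1) = y * bT y (ν + 1) k := by
  have h0 := gamma_pos' ν hν k
  have hk : 0 < (k : ℝ) + ν := by positivity
  unfold bT
  have : ((k + 1 : ℕ) : ℝ) + ν = (k + (ν + 1)) := by push_cast; ring
  have h1 := gamma_pos' (ν + 1) (by linarith) k
  rw [this, Nat.factorial_succ]
  push_cast
  field_simp
  ring

lemma hasSum_k {y ν : ℝ} (hy : 0 ≤ y) (hν : 1 ≤ ν) :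
    HasSum (fun k : ℕ => (k : ℝ) * bT y ν k) (y * bS y (ν + 1)) := by
  have h := ((bT_summable hy (by linarith : 1 ≤ ν + 1)).hasSum).mul_left y
  rw [← hasSum_nat_add_iff' 1]
  simp only [Finset.sum_range_one, Nat.cast_zero, zero_mul, sub_zero]
  refine (congrArg (fun f => HasSum f _) (funext fun k => ?_)).mpr h
  rw [← bT_succ_k hν]; push_cast; rfl

lemma hasSum_kk {y ν : ℝ} (hy : 0 ≤ y) (hν : 1 ≤ ν) :
    HasSum (fun k : ℕ => (k : ℝ) * (k + ν - 1) * bT y ν k) (y * bS y ν) := by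
  have h := ((bT_summable hy hν).hasSum).mul_left y
  rw [← hasSum_nat_add_iff' 1]
  simp only [Finset.sum_range_one, Nat.cast_zero, zero_mul, sub_zero]
  refine (congrArg (fun f => HasSum f _) (funext fun k => ?_)).mpr h
  have a := bT_succ_nu (y := y) hν k
  have b := bT_succ_k (y := y) hν k
  rw [← a]; push_cast; linear_combination ((k : ℝ) + ν) * b

lemma bS_rec {y ν : ℝ} (hy : 0 ≤ y) (hν : 1 ≤ ν) :
    bS y ν = ν * bS y (ν + 1) + y * bS y (ν + 2) := by
  have h1 := hasSum_k hy (by linarith : 1 ≤ ν + 1)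
  have h2 := ((bT_summable hy (by linarith : 1 ≤ ν + 1)).hasSum).mul_left ν
  have h3 := h2.add h1
  have : ν + 1 + 1 = ν + 2 := by ring
  rw [this] at h3
  refine HasSum.tsum_eq ?_
  refine (congrArg (fun f => HasSum f _) (funext fun k => ?_)).mpr h3
  rw [← bT_succ_nu hν]; ring

lemma tangent_aux {p d g N M : ℝ} (hp : p ≠ 0) (hd : d ≠ 0) (hg : g ≠ 0)
    (h : p ^ 2 * d - p * d * g + N * g = M) :
    1 / g - (1 / p - 1 / (p ^ 2 * d) * N) = M / (p ^ 2 * d * g) := by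
  rw [← h]; field_simp; ring

lemma tangent {κ ν k : ℝ} (hκ : 0 < κ) (hν : 1 ≤ ν) (hk : 0 ≤ k) :
    1 / (κ + ν) - 1 / ((κ + ν) ^ 2 * (2 * κ + ν - 1)) * (k * (k + ν - 1) - κ * (κ + ν - 1))
      ≤ 1 / (k + ν) := by
  have h1 : 0 < κ + ν := by linarith
  have h2 : 0 < 2 * κ + ν - 1 := by linarith
  have h3 : 0 < k + ν := by linarith
  have : 1 / (k + ν) - (1 / (κ + ν) - 1 / ((κ + ν) ^ 2 * (2 * κ + ν - 1)) *
      (k * (k + ν - 1) - κ * (κ + ν - 1))) =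
      (k - κ) ^ 2 * (k + 2 * κ + 2 * ν - 1) / ((κ + ν) ^ 2 * (2 * κ + ν - 1) * (k + ν)) := by
    exact tangent_aux h1.ne' h2.ne' h3.ne' (by ring)
  have h4 : 0 ≤ (k - κ) ^ 2 * (k + 2 * κ + 2 * ν - 1) /
      ((κ + ν) ^ 2 * (2 * κ + ν - 1) * (k + ν)) := by
    have : 0 ≤ k + 2 * κ + 2 * ν - 1 := by linarith
    positivity
  linarith

lemma bS_lower {κ ν : ℝ} (hκ : 0 < κ) (hν : 1 ≤ ν) :
    bS (κ * (κ + ν - 1)) ν / (κ + ν) ≤ bS (κ * (κ + ν - 1)) (ν + 1) := by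
  set y := κ * (κ + ν - 1) with hy
  have hy0 : 0 ≤ y := by rw [hy]; exact mul_nonneg hκ.le (by linarith)
  set β := 1 / ((κ + ν) ^ 2 * (2 * κ + ν - 1)) with hβ
  have hs1 := ((bT_summable hy0 hν).hasSum).mul_left (1 / (κ + ν) + β * y)
  have hs2 := (hasSum_kk hy0 hν).mul_left β
  have hs3 := hs1.sub hs2
  have hs4 := (bT_summable hy0 (by linarith : 1 ≤ ν + 1)).hasSum
  have := hasSum_le (fun k => ?_) hs3 hs4
  · have e : ∑' k, bT y ν k = bS y ν := rfl
    have e' : ∑' k, bT y (ν + 1) k = bS y (ν + 1) := rfl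
    rw [e, e'] at this
    refine le_trans (le_of_eq ?_) this
    ring
  · have hk : (0 : ℝ) ≤ k := by positivity
    have ht := tangent hκ hν hk
    rw [← hβ, ← hy] at ht
    have hb := bT_nonneg hy0 hν k
    have e : bT y (ν + 1) k = 1 / (k + ν) * bT y ν k := by
      rw [← bT_succ_nu hν]; have : (k : ℝ) + ν ≠ 0 := by positivity
      field_simp
    rw [e]
    refine le_trans (le_of_eq ?_) (mul_le_mul_of_nonneg_right ht hb)
    ring

lemma term_eq {x ν : ℝ} (hx : 0 < x) (k : ℕ) :
    (x / 2) ^ (2 * (k : ℝ) + ν) / (k.factorial * Real.Gamma ((k : ℝ) + ν + 1))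
      = (x / 2) ^ ν * bT ((x / 2) ^ 2) (ν + 1) k := by
  unfold bT
  rw [Real.rpow_add (by positivity), ← pow_mul, ← Real.rpow_natCast (x / 2) (2 * k), ← add_assoc]
  push_cast
  ring

lemma besselI_eq {x ν : ℝ} (hx : 0 < x) :
    besselI ν x = (x / 2) ^ ν * bS ((x / 2) ^ 2) (ν + 1) := by
  unfold besselI bS
  simp_rw [term_eq hx]
  exact tsum_mul_left

lemma ratio_eq {x ν : ℝ} (hx : 0 < x) :
    besselRatio ν x = (x / 2) * (bS ((x / 2) ^ 2) (ν + 1) / bS ((x / 2) ^ 2) ν) := by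
  unfold besselRatio
  rw [besselI_eq hx, besselI_eq hx, sub_add_cancel, Real.rpow_sub_one (by positivity)]
  have : (x / 2) ^ ν ≠ 0 := by positivity
  field_simp

lemma ratio_lower {x ν : ℝ} (hx : 0 < x) (hν : 1 ≤ ν) :
    x / (ν + 1 + √((ν - 1) ^ 2 + x ^ 2)) ≤ besselRatio ν x := by
  set r := √((ν - 1) ^ 2 + x ^ 2) with hr
  have hr2 : r ^ 2 = (ν - 1) ^ 2 + x ^ 2 := Real.sq_sqrt (by positivity)
  have hr0 : 0 ≤ r := Real.sqrt_nonneg _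
  have hlt : ν - 1 < r := by
    apply lt_of_pow_lt_pow_left₀ 2 hr0; rw [hr2]; nlinarith
  have hκ : 0 < (r - (ν - 1)) / 2 := by linarith
  have hl := bS_lower hκ hν
  have e : (r - (ν - 1)) / 2 * ((r - (ν - 1)) / 2 + ν - 1) = (x / 2) ^ 2 := by nlinarith
  rw [e] at hl
  have hS := bS_pos (y := (x / 2) ^ 2) (by positivity) hν
  rw [ratio_eq hx]
  have e2 : x / (ν + 1 + r) = x / 2 * (1 / ((r - (ν - 1)) / 2 + ν)) := by
    have : (r - (ν - 1)) / 2 + ν = (ν + 1 + r) / 2 := by ring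
    rw [this]
    have : 0 < ν + 1 + r := by linarith
    field_simp
  rw [e2]
  refine mul_le_mul_of_nonneg_left ?_ (by positivity)
  rw [le_div_iff₀ hS]
  refine le_trans (le_of_eq ?_) hl
  ring

lemma ratio_pos {x ν : ℝ} (hx : 0 < x) (hν : 1 ≤ ν) : 0 < besselRatio ν x := by
  have hS := bS_pos (y := (x / 2) ^ 2) (by positivity) hν
  have hS' := bS_pos (y := (x / 2) ^ 2) (by positivity) (by linarith : 1 ≤ ν + 1)
  rw [ratio_eq hx]; positivity

lemma ratio_rec {x ν : ℝ} (hx : 0 < x) (hν : 1 ≤ ν) :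
    (besselRatio ν x)⁻¹ = 2 * ν / x + besselRatio (ν + 1) x := by
  have hS := bS_pos (y := (x / 2) ^ 2) (by positivity) hν
  have hS' := bS_pos (y := (x / 2) ^ 2) (by positivity) (by linarith : 1 ≤ ν + 1)
  have h := bS_rec (y := (x / 2) ^ 2) (by positivity) hν
  rw [ratio_eq hx, ratio_eq hx, add_assoc ν 1 1, one_add_one_eq_two, mul_inv, inv_div, h]
  generalize bS ((x / 2) ^ 2) (ν + 1) = A at *
  generalize bS ((x / 2) ^ 2) (ν + 2) = B at *
  field_simp

lemma ratio_upper {x ν : ℝ} (hx : 0 < x) (hν : 1 ≤ ν) :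
    besselRatio ν x ≤ (2 * ν / x + x / (ν + 2 + √(ν ^ 2 + x ^ 2)))⁻¹ := by
  have h1 := ratio_lower hx (by linarith : 1 ≤ ν + 1)
  have h0 := ratio_pos hx hν
  rw [le_inv_comm₀ h0 (by positivity), ratio_rec hx hν]
  rw [add_assoc ν 1 1, one_add_one_eq_two, add_sub_cancel_right] at h1
  linarith

lemma ratio_upper' {x ν : ℝ} (hx : 0 < x) (hν : 1 ≤ ν) :
    besselRatio ν x ≤ x / (2 * ν) := by
  have h0 := ratio_pos hx hν
  have h1 := ratio_pos hx (by linarith : 1 ≤ ν + 1)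
  rw [← inv_div, le_inv_comm₀ h0 (by positivity), ratio_rec hx hν]
  linarith

lemma ratio_zero {ν : ℝ} (hν : 1 ≤ ν) : besselRatio ν 0 = 0 := by
  have : besselI ν 0 = 0 := by
    unfold besselI
    convert tsum_zero with k
    rw [zero_div, Real.zero_rpow (by positivity), zero_div]
  simp [besselRatio, this]

lemma besselI_meas {α : Type*} [MeasurableSpace α] {ν : ℝ} (hν : 0 ≤ ν) {φ : α → ℝ}
    (hφ : Measurable φ) (h0 : ∀ a, 0 ≤ φ a) : Measurable (fun a => besselI ν (φ a)) := by
  refine measurable_of_tendsto_metrizable (f := fun (n : ℕ) a => ∑ k ∈ Finset.range n,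
    (φ a / 2) ^ (2 * (k : ℝ) + ν) / (k.factorial * Real.Gamma ((k : ℝ) + ν + 1))) ?_ ?_
  · intro n; fun_prop
  · rw [tendsto_pi_nhds]
    intro a
    refine HasSum.tendsto_sum_nat (Summable.hasSum ?_)
    rcases (h0 a).eq_or_lt with h | h
    · rw [← h]
      refine summable_of_ne_finset_zero (s := {0}) (fun k hk => ?_)
      have hk : 0 < k := by simpa [Nat.pos_iff_ne_zero] using hk
      rw [zero_div, Real.zero_rpow (by positivity), zero_div]
    · simp_rw [term_eq h]
      exact (bT_summable (by positivity) (by linarith)).mul_left _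

lemma ratio_meas {α : Type*} [MeasurableSpace α] {ν : ℝ} (hν : 1 ≤ ν) {φ : α → ℝ}
    (hφ : Measurable φ) (h0 : ∀ a, 0 ≤ φ a) : Measurable (fun a => besselRatio ν (φ a)) :=
  (besselI_meas (by linarith) hφ h0).div (besselI_meas (by linarith) hφ h0)

lemma sqrt_scale {n a b : ℝ} (hn : 0 ≤ n) : √((n * a) ^ 2 + (n * b) ^ 2) = n * √(a ^ 2 + b ^ 2) := by
  rw [show (n * a) ^ 2 + (n * b) ^ 2 = n ^ 2 * (a ^ 2 + b ^ 2) by ring,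
    Real.sqrt_mul (by positivity), Real.sqrt_sq hn]

lemma ratio_tendsto {t : ℝ} (ht : 0 < t) :
    Tendsto (fun p : ℕ × ℝ => besselRatio ((p.1 : ℝ) / 2) (p.1 * p.2)) (atTop ×ˢ nhds t)
      (nhds (t / (1 / 2 + √(1 / 4 + t ^ 2)))) := by
  have hE : Tendsto (fun p : ℕ × ℝ => (1 / (p.1 : ℝ), p.2)) (atTop ×ˢ nhds t)
      (nhds ((0 : ℝ), t)) := by
    rw [nhds_prod_eq]
    exact (tendsto_one_div_atTop_nhds_zero_nat.comp tendsto_fst).prodMk tendsto_snd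
  have hlow : Tendsto (fun q : ℝ × ℝ => q.2 / (1 / 2 + q.1 + √((1 / 2 - q.1) ^ 2 + q.2 ^ 2)))
      (nhds ((0 : ℝ), t)) (nhds (t / (1 / 2 + √(1 / 4 + t ^ 2)))) := by
    have hc : ContinuousAt (fun q : ℝ × ℝ =>
        q.2 / (1 / 2 + q.1 + √((1 / 2 - q.1) ^ 2 + q.2 ^ 2))) ((0 : ℝ), t) := by
      refine ContinuousAt.div (by fun_prop) (by fun_prop) ?_
      simp only
      positivity
    have := hc.tendsto
    simp only at this
    convert this using 2
    norm_num
  have hup : Tendsto (fun q : ℝ × ℝ =>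
        (1 / q.2 + q.2 / (1 / 2 + 2 * q.1 + √((1 / 2) ^ 2 + q.2 ^ 2)))⁻¹)
      (nhds ((0 : ℝ), t)) (nhds (t / (1 / 2 + √(1 / 4 + t ^ 2)))) := by
    have hc : ContinuousAt (fun q : ℝ × ℝ =>
        (1 / q.2 + q.2 / (1 / 2 + 2 * q.1 + √((1 / 2) ^ 2 + q.2 ^ 2)))⁻¹) ((0 : ℝ), t) := by
      refine ContinuousAt.inv₀ (ContinuousAt.add (ContinuousAt.div (by fun_prop) (by fun_prop) ?_)
        (ContinuousAt.div (by fun_prop) (by fun_prop) ?_)) ?_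
      all_goals
        simp only
        positivity
    have := hc.tendsto
    simp only at this
    convert this using 2
    have e : ((1 : ℝ) / 2) ^ 2 = 1 / 4 := by norm_num
    rw [e, mul_zero, add_zero]
    have hr2 : √(1 / 4 + t ^ 2) ^ 2 = 1 / 4 + t ^ 2 := Real.sq_sqrt (by positivity)
    have hr0 : 0 ≤ √(1 / 4 + t ^ 2) := Real.sqrt_nonneg _
    generalize √(1 / 4 + t ^ 2) = r at *
    refine (inv_div (1 / 2 + r) t).symm.trans ?_
    congr 1
    have h1 : 0 < 1 / 2 + r := by positivity
    rw [div_add_div _ _ ht.ne' h1.ne', div_eq_div_iff ht.ne' (by positivity)]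
    linear_combination t * hr2
  have hn2 : ∀ᶠ p : ℕ × ℝ in atTop ×ˢ nhds t, 2 ≤ p.1 ∧ 0 < p.2 :=
    (tendsto_fst.eventually (eventually_ge_atTop 2)).and
      (tendsto_snd.eventually (lt_mem_nhds ht))
  refine tendsto_of_tendsto_of_tendsto_of_le_of_le' (hlow.comp hE) (hup.comp hE) ?_ ?_
  · filter_upwards [hn2] with p hp
    obtain ⟨n, u⟩ := p
    obtain ⟨hn, hu⟩ := hp
    simp only at hn hu
    have hn' : (2 : ℝ) ≤ n := by exact_mod_cast hn
    have hn0 : (0 : ℝ) < n := by linarith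
    have h := ratio_lower (x := n * u) (ν := (n : ℝ) / 2) (by positivity) (by linarith)
    simp only [Function.comp]
    refine le_trans (le_of_eq ?_) h
    have e1 : (n : ℝ) / 2 - 1 = n * (1 / 2 - 1 / n) := by field_simp
    rw [e1, sqrt_scale hn0.le, show (n : ℝ) / 2 + 1 = n * (1 / 2 + 1 / n) by field_simp, ← mul_add,
      mul_div_mul_left _ _ hn0.ne']
  · filter_upwards [hn2] with p hp
    obtain ⟨n, u⟩ := p
    obtain ⟨hn, hu⟩ := hp
    simp only at hn hu
    have hn' : (2 : ℝ) ≤ n := by exact_mod_cast hn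
    have hn0 : (0 : ℝ) < n := by linarith
    have h := ratio_upper (x := n * u) (ν := (n : ℝ) / 2) (by positivity) (by linarith)
    simp only [Function.comp]
    refine le_trans h (le_of_eq ?_)
    have e1 : (n : ℝ) / 2 = n * (1 / 2) := by ring
    rw [e1, sqrt_scale hn0.le, show (n : ℝ) * (1 / 2) + 2 = n * (1 / 2 + 2 * (1 / n)) by field_simp,
      ← mul_add, mul_div_mul_left _ _ hn0.ne', show 2 * ((n : ℝ) * (1 / 2)) = n * 1 by ring,
      mul_div_mul_left _ _ hn0.ne']

instance (n : ℕ) : IsProbabilityMeasure (stdGaussian n) := by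
  unfold _root_.stdGaussian; infer_instance

lemma memLp_sq : MemLp (fun x : ℝ => x ^ 2) 2 (gaussianReal 0 1) := by
  have h := memLp_id_gaussianReal' (μ := 0) (v := 1) 4 (by simp)
  rw [memLp_two_iff_integrable_sq (by fun_prop)]
  have := h.integrable_norm_pow (by norm_num)
  refine this.congr (Eventually.of_forall fun x => ?_)
  simp only [id, Real.norm_eq_abs, ← pow_mul]
  exact Even.pow_abs (by decide) x

lemma integral_sq : ∫ x, x ^ 2 ∂(gaussianReal 0 1) = 1 := by
  have h := variance_fun_id_gaussianReal (μ := 0) (v := 1)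
  rw [variance_eq_integral (by fun_prop)] at h
  simpa using h

noncomputable def WW (n : ℕ) (z : Fin n → ℝ) : ℝ := (∑ i, z i ^ 2) / n

lemma WW_memLp (n : ℕ) : MemLp (WW n) 2 (stdGaussian n) := by
  have : MemLp (fun z : Fin n → ℝ => ∑ i, z i ^ 2) 2 (stdGaussian n) :=
    memLp_finsetSum _ fun i _ => memLp_sq.comp_measurePreserving
      (measurePreserving_eval (fun _ : Fin n => gaussianReal 0 1) i)
  have h2 := this.mul_const ((n : ℝ)⁻¹)
  exact h2

lemma WW_sum_mean (n : ℕ) : ∫ z, ∑ i, z i ^ 2 ∂(stdGaussian n) = n := by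
  rw [integral_finsetSum]
  · have : ∀ i : Fin n, ∫ z, z i ^ 2 ∂(stdGaussian n) = 1 := fun i => by
      rw [← integral_sq]
      exact integral_comp_eval (μ := fun _ : Fin n => gaussianReal 0 1) (i := i)
        (f := fun x : ℝ => x ^ 2) (by fun_prop)
    simp [this]
  · intro i _
    exact (memLp_sq.comp_measurePreserving
      (measurePreserving_eval (fun _ : Fin n => gaussianReal 0 1) i)).integrable (by norm_num)

lemma WW_var {n : ℕ} (hn : 0 < n) :
    ∫ z, (WW n z - 1) ^ 2 ∂(stdGaussian n) = Var[fun x : ℝ => x ^ 2; gaussianReal 0 1] / n := by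
  have hn' : (n : ℝ) ≠ 0 := by positivity
  have h := variance_sum_pi (μ := fun _ : Fin n => gaussianReal 0 1)
    (X := fun _ (x : ℝ) => x ^ 2) (fun _ => memLp_sq)
  have e : (∑ i : Fin n, fun ω : Fin n → ℝ => ω i ^ 2) = fun ω => ∑ i, ω i ^ 2 := by
    ext; simp
  rw [e, variance_eq_integral (Measurable.aemeasurable (by fun_prop))] at h
  change ∫ z, (_ - ∫ z, ∑ i, z i ^ 2 ∂(stdGaussian n)) ^ 2 ∂(stdGaussian n) = _ at h
  rw [WW_sum_mean] at h
  have : ∀ z : Fin n → ℝ, (WW n z - 1) ^ 2 = (1 / (n : ℝ) ^ 2) * (∑ i, z i ^ 2 - n) ^ 2 := by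
    intro z; unfold WW; field_simp
  simp_rw [this]
  rw [integral_const_mul, h]
  simp
  field_simp

lemma arg_eq {s c : ℝ} (hs : 0 < s) {n : ℕ} (hn : 0 < n) (z : Fin n → ℝ) :
    euclNorm (fun i => Real.sqrt s * z i) * (c * Real.sqrt n) / s
      = n * (c / √s * √(WW n z)) := by
  unfold euclNorm WW
  have hn' : (0 : ℝ) < n := by positivity
  simp_rw [mul_pow, ← Finset.mul_sum]
  rw [Real.sq_sqrt hs.le, Real.sqrt_mul hs.le, Real.sqrt_div' _ hn'.le]
  have h1 : √s ^ 2 = s := Real.sq_sqrt hs.le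
  have h2 : √(n : ℝ) ^ 2 = n := Real.sq_sqrt hn'.le
  have h3 : 0 < √s := Real.sqrt_pos.2 hs
  have h4 : 0 < √(n : ℝ) := Real.sqrt_pos.2 hn'
  generalize √s = a at *
  generalize √(n : ℝ) = b at *
  rw [← h1, ← h2]
  field_simp

lemma FF_bound {n : ℕ} (hn : 2 ≤ n) {a w : ℝ} (ha : 0 < a) (hw : 0 ≤ w) :
    besselRatio ((n : ℝ) / 2) (n * (a * √w)) ^ 2 ≤ a ^ 2 * w := by
  have hn' : (2 : ℝ) ≤ n := by exact_mod_cast hn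
  rcases hw.eq_or_lt with h | h
  · rw [← h, Real.sqrt_zero, mul_zero, mul_zero, ratio_zero (by linarith)]; simp
  · have hx : 0 < n * (a * √w) := by positivity
    have h1 := ratio_upper' hx (by linarith : 1 ≤ (n : ℝ) / 2)
    have h0 := ratio_pos hx (by linarith : 1 ≤ (n : ℝ) / 2)
    have e : n * (a * √w) / (2 * ((n : ℝ) / 2)) = a * √w := by field_simp
    rw [e] at h1
    calc _ ≤ (a * √w) ^ 2 := by gcongr
      _ = _ := by rw [mul_pow, Real.sq_sqrt hw]

lemma tail_bound {F w C Q δ : ℝ} (hF0 : 0 ≤ F) (hF : F ≤ C * w) (hC : 0 ≤ C) (hQ : 0 ≤ Q)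
    (hδ : 0 < δ) (h : δ ≤ |w - 1|) :
    |F - Q| ≤ (C / δ + (C + Q) / δ ^ 2) * (w - 1) ^ 2 := by
  have h1 : |F - Q| ≤ C * |w - 1| + (C + Q) := by
    have : w ≤ |w - 1| + 1 := by linarith [le_abs_self (w - 1)]
    have := mul_le_mul_of_nonneg_left this hC
    rw [abs_le]; constructor <;> nlinarith [abs_nonneg (w - 1)]
  refine h1.trans ?_
  rw [← sq_abs (w - 1)]
  generalize |w - 1| = r at *
  have hr : 0 < r := by linarith
  have e1 : C * r ≤ C / δ * r ^ 2 := by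
    rw [div_mul_eq_mul_div, le_div_iff₀ hδ]
    have := mul_le_mul_of_nonneg_left h (mul_nonneg hC hr.le)
    nlinarith
  have e2 : C + Q ≤ (C + Q) / δ ^ 2 * r ^ 2 := by
    rw [div_mul_eq_mul_div, le_div_iff₀ (by positivity)]
    gcongr
  linarith

theorem limit_h_sq_centered (s c : ℝ) (hs : 0 < s) (hc : 0 < c) :
    Tendsto (fun n : ℕ =>
        ∫ z, (besselRatio ((n : ℝ) / 2)
            (euclNorm (fun i => Real.sqrt s * z i) * (c * Real.sqrt n) / s)) ^ 2
          ∂(stdGaussian n))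
      atTop (nhds (c ^ 2 / (Real.sqrt s / 2 + Real.sqrt (s / 4 + c ^ 2)) ^ 2)) := by
  set a := c / √s with ha
  have hss : 0 < √s := Real.sqrt_pos.2 hs
  have ha0 : 0 < a := by positivity
  set L := a / (1 / 2 + √(1 / 4 + a ^ 2)) with hL
  have hLeq : c ^ 2 / (Real.sqrt s / 2 + Real.sqrt (s / 4 + c ^ 2)) ^ 2 = L ^ 2 := by
    have e : s / 4 + c ^ 2 = s * (1 / 4 + a ^ 2) := by
      rw [ha, div_pow, Real.sq_sqrt hs.le]; field_simp
    rw [hL, e, Real.sqrt_mul hs.le, ← div_pow, ha]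
    congr 1
    rw [div_div, mul_add]
    congr 2; ring
  rw [hLeq]
  have hT : Tendsto (fun p : ℕ × ℝ => besselRatio ((p.1 : ℝ) / 2) (p.1 * (a * √p.2)) ^ 2)
      (atTop ×ˢ nhds 1) (nhds (L ^ 2)) := by
    have h1 : Tendsto (fun w : ℝ => a * √w) (nhds 1) (nhds a) := by
      have : ContinuousAt (fun w : ℝ => a * √w) 1 := by fun_prop
      simpa using this.tendsto
    have h2 : Tendsto (fun p : ℕ × ℝ => (p.1, a * √p.2)) (atTop ×ˢ nhds 1) (atTop ×ˢ nhds a) :=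
      tendsto_fst.prodMk (h1.comp tendsto_snd)
    exact ((ratio_tendsto ha0).comp h2).pow 2
  rw [Metric.tendsto_atTop']
  intro ε hε
  have hev := hT.eventually (Metric.ball_mem_nhds _ (half_pos hε))
  obtain ⟨pa, hpa, pb, hpb, hab⟩ := eventually_prod_iff.1 hev
  obtain ⟨δ, hδ, hpb⟩ := Metric.eventually_nhds_iff.1 hpb
  set D := a ^ 2 / δ + (a ^ 2 + L ^ 2) / δ ^ 2 with hD
  have hDn : 0 ≤ D := by positivity
  set v := Var[fun x : ℝ => x ^ 2; gaussianReal 0 1] with hv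
  have hlim : Tendsto (fun n : ℕ => D * (v / n)) atTop (nhds 0) := by
    have := (tendsto_const_div_atTop_nhds_zero_nat v).const_mul D
    simpa using this
  have hev2 := hlim.eventually (gt_mem_nhds (half_pos hε))
  obtain ⟨N, hN⟩ := eventually_atTop.1 ((hpa.and hev2).and (eventually_ge_atTop 2))
  refine ⟨N, fun n hn => ?_⟩
  obtain ⟨⟨hp, hsm⟩, hn2⟩ := hN n hn.le
  have hn2' : (2 : ℝ) ≤ n := by exact_mod_cast hn2
  have hW0 : ∀ z : Fin n → ℝ, 0 ≤ WW n z := fun z => by unfold WW; positivity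
  have hWm : Measurable (WW n) := by unfold WW; fun_prop
  simp_rw [arg_eq (c := c) hs (by omega : 0 < n), ← ha]
  set F : (Fin n → ℝ) → ℝ := fun z => besselRatio ((n : ℝ) / 2) (n * (a * √(WW n z))) ^ 2 with hF
  have hFm : Measurable F :=
    (ratio_meas (by linarith) (by fun_prop) (fun z => by positivity)).pow_const 2
  have hWi : Integrable (WW n) (stdGaussian n) := (WW_memLp n).integrable (by norm_num)
  have hFi : Integrable F (stdGaussian n) := by
    refine (hWi.const_mul (a ^ 2)).mono' hFm.aestronglyMeasurable (Eventually.of_forall fun z => ?_)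
    rw [Real.norm_eq_abs, abs_of_nonneg (sq_nonneg _)]
    exact FF_bound hn2 ha0 (hW0 z)
  have hW2 : Integrable (fun z => (WW n z - 1) ^ 2) (stdGaussian n) :=
    ((WW_memLp n).sub (memLp_const 1)).integrable_sq
  have hpt : ∀ z, |F z - L ^ 2| ≤ ε / 2 + D * (WW n z - 1) ^ 2 := by
    intro z
    by_cases h : |WW n z - 1| < δ
    · have h1 := hab hp (hpb (by rwa [Real.dist_eq]))
      rw [Real.dist_eq] at h1
      have : 0 ≤ D * (WW n z - 1) ^ 2 := by positivity
      have h2 : |F z - L ^ 2| < ε / 2 := h1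
      linarith
    · have := tail_bound (sq_nonneg _) (FF_bound hn2 ha0 (hW0 z)) (sq_nonneg a) (sq_nonneg L) hδ
        (not_lt.1 h)
      have h2 : |F z - L ^ 2| ≤ D * (WW n z - 1) ^ 2 := this
      linarith
  rw [Real.dist_eq]
  have e1 : ∫ z, F z ∂(stdGaussian n) - L ^ 2 = ∫ z, (F z - L ^ 2) ∂(stdGaussian n) := by
    rw [integral_sub hFi (integrable_const _)]; simp
  rw [e1]
  calc |∫ z, (F z - L ^ 2) ∂(stdGaussian n)| ≤ ∫ z, |F z - L ^ 2| ∂(stdGaussian n) :=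
        abs_integral_le_integral_abs
    _ ≤ ∫ z, (ε / 2 + D * (WW n z - 1) ^ 2) ∂(stdGaussian n) :=
        integral_mono (hFi.sub (integrable_const _)).abs
          ((integrable_const _).add (hW2.const_mul D)) hpt
    _ = ε / 2 + D * (v / n) := by
        rw [integral_add (integrable_const _) (hW2.const_mul D), integral_const_mul,
          WW_var (by omega)]
        simp [hv]
    _ < ε := by linarith
end

section
/- For 0 ≤ ρ₂ < ρ₁ and σ > 0 and integer n ≥ 1, ∫₀^∞ (F_{χ²_n(ρ₂²/σ²)}(y) − F_{χ²_n(ρ₁²/σ²)}(y)) dy = (ρ₁² − ρ₂²)/σ², and the integrand is nonnegative for all y. -/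
/-- Central chi-square density with `k` degrees of freedom. -/
noncomputable def chiSqPdf (k : ℕ) (y : ℝ) : ℝ :=
  y ^ ((k : ℝ) / 2 - 1) * Real.exp (-y / 2) / (2 ^ ((k : ℝ) / 2) * Real.Gamma ((k : ℝ) / 2))

/-- Noncentral chi-square density (Poisson-weighted mixture of central chi-square densities). -/
noncomputable def ncChiSqPdf (n : ℕ) (lam y : ℝ) : ℝ :=
  ∑' i : ℕ, Real.exp (-lam / 2) * (lam / 2) ^ i / i.factorial * chiSqPdf (n + 2 * i) y

/-- Noncentral chi-square CDF. -/
noncomputable def ncChiSqCdf (n : ℕ) (lam y : ℝ) : ℝ :=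
  ∫ t in Set.Ioc (0 : ℝ) y, ncChiSqPdf n lam t

open MeasureTheory Set

lemma hs_congr {ι : Type} {f g : ι → ℝ} {a : ℝ} (h : ∀ i, f i = g i) : HasSum f a ↔ HasSum g a := by
  rw [funext h]

lemma aux_cast (k : ℕ) (hk : 1 ≤ k) : (0:ℝ) < (k:ℝ)/2 := by
  have : (1:ℝ) ≤ k := by exact_mod_cast hk
  linarith

lemma chi_nonneg (k : ℕ) (hk : 1 ≤ k) (y : ℝ) (hy : 0 ≤ y) : 0 ≤ chiSqPdf k y := by
  have := Real.Gamma_pos_of_pos (aux_cast k hk)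
  unfold chiSqPdf
  positivity

lemma chi_integral (k : ℕ) (hk : 1 ≤ k) : ∫ y in Ioi (0:ℝ), chiSqPdf k y = 1 := by
  have hp := aux_cast k hk
  have hG := Real.Gamma_pos_of_pos hp
  have h := Real.integral_rpow_mul_exp_neg_mul_Ioi hp (r := 1/2) (by norm_num)
  unfold chiSqPdf
  rw [integral_div]
  have h2 : ∀ t : ℝ, -(1/2 * t) = -t/2 := fun t => by ring
  simp only [h2] at h
  rw [h]
  have : (1 / (1/2 : ℝ)) = 2 := by norm_num
  rw [this]
  have : (0:ℝ) < 2 ^ ((k:ℝ)/2) := by positivity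
  field_simp

lemma chi_integrable (k : ℕ) (hk : 1 ≤ k) : IntegrableOn (chiSqPdf k) (Ioi (0:ℝ)) := by
  by_contra h
  have := chi_integral k hk
  rw [integral_undef h] at this
  norm_num at this

noncomputable def cG (k : ℕ) (y : ℝ) : ℝ := ∫ t in Ioc (0:ℝ) y, chiSqPdf k t

lemma cG_nonneg (k : ℕ) (hk : 1 ≤ k) (y : ℝ) : 0 ≤ cG k y :=
  setIntegral_nonneg measurableSet_Ioc fun t ht => chi_nonneg k hk t ht.1.le

lemma cG_le_one (k : ℕ) (hk : 1 ≤ k) (y : ℝ) : cG k y ≤ 1 := by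
  rw [← chi_integral k hk]
  refine setIntegral_mono_set (chi_integrable k hk) ?_ ?_
  · exact (ae_restrict_mem measurableSet_Ioi).mono fun t ht => chi_nonneg k hk t (le_of_lt ht)
  · exact (Ioc_subset_Ioi_self).eventuallyLE

lemma chi_succ (k : ℕ) (hk : 1 ≤ k) (y : ℝ) :
    2 * chiSqPdf (k+2) y = y ^ ((k:ℝ)/2) * Real.exp (-y/2) /
      (2 ^ ((k : ℝ) / 2) * ((k:ℝ)/2 * Real.Gamma ((k : ℝ) / 2))) := by
  have hp := aux_cast k hk
  unfold chiSqPdf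
  have h1 : (((k+2 : ℕ) : ℝ) / 2) = (k:ℝ)/2 + 1 := by push_cast; ring
  rw [h1, Real.Gamma_add_one hp.ne', Real.rpow_add_one (by norm_num), add_sub_cancel_right]
  have hG := Real.Gamma_pos_of_pos hp
  have : (0:ℝ) < 2 ^ ((k:ℝ)/2) := by positivity
  field_simp

lemma chi_deriv (k : ℕ) (hk : 1 ≤ k) (y : ℝ) (hy : 0 < y) :
    HasDerivAt (fun y => 2 * chiSqPdf (k+2) y) (chiSqPdf k y - chiSqPdf (k+2) y) y := by
  have hp := aux_cast k hk
  have hG := Real.Gamma_pos_of_pos hp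
  have h2 : (0:ℝ) < 2 ^ ((k:ℝ)/2) := by positivity
  have e : chiSqPdf (k+2) y = (2 * chiSqPdf (k+2) y) / 2 := by ring
  rw [e]
  simp only [chi_succ k hk]
  have d1 := Real.hasDerivAt_rpow_const (x := y) (p := (k:ℝ)/2) (Or.inl hy.ne')
  have d2 : HasDerivAt (fun y : ℝ => Real.exp (-y/2)) (Real.exp (-y/2) * (-1/2)) y :=
    (((hasDerivAt_id y).neg).div_const 2).exp
  refine ((d1.mul d2).div_const
    (2 ^ ((k : ℝ) / 2) * ((k:ℝ)/2 * Real.Gamma ((k : ℝ) / 2)))).congr_deriv ?_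
  unfold chiSqPdf
  have hk' : (k:ℝ) ≠ 0 := by positivity
  field_simp
  ring

lemma cG_step (k : ℕ) (hk : 1 ≤ k) (y : ℝ) (hy : 0 < y) :
    cG k y - cG (k+2) y = 2 * chiSqPdf (k+2) y := by
  have hp := aux_cast k hk
  have i1 : IntegrableOn (chiSqPdf k) (Ioc 0 y) := (chi_integrable k hk).mono_set Ioc_subset_Ioi_self
  have i2 : IntegrableOn (chiSqPdf (k+2)) (Ioc 0 y) :=
    (chi_integrable (k+2) (by omega)).mono_set Ioc_subset_Ioi_self
  unfold cG
  rw [← integral_sub i1 i2, ← intervalIntegral.integral_of_le hy.le,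
    intervalIntegral.integral_eq_sub_of_hasDerivAt_of_le hy.le
      (f := fun y => 2 * chiSqPdf (k+2) y)]
  · rw [chi_succ k hk 0, Real.zero_rpow hp.ne']
    simp
  · simp only [chi_succ k hk]
    refine Continuous.continuousOn ?_
    have := Real.continuous_rpow_const hp.le
    fun_prop
  · intro x hx
    exact chi_deriv k hk x hx.1
  · rw [intervalIntegrable_iff_integrableOn_Ioc_of_le hy.le]
    exact i1.sub i2

lemma cG_nonpos (k : ℕ) (y : ℝ) (hy : y ≤ 0) : cG k y = 0 := by
  unfold cG
  rw [Ioc_eq_empty (by simpa using hy)]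
  simp

lemma cG_diff (k : ℕ) (hk : 1 ≤ k) (j : ℕ) (y : ℝ) (hy : 0 < y) :
    cG k y - cG (k+2*j) y = ∑ m ∈ Finset.range j, 2 * chiSqPdf (k+2*m+2) y := by
  induction j with
  | zero => simp
  | succ j ih =>
    rw [Finset.sum_range_succ, ← ih, ← cG_step (k+2*j) (by omega) y hy]
    have : k + 2 * (j+1) = k + 2*j+2 := by ring
    rw [this]; ring

lemma cG_diff_nonneg (k : ℕ) (hk : 1 ≤ k) (j : ℕ) (y : ℝ) :
    0 ≤ cG k y - cG (k+2*j) y := by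
  rcases le_or_gt y 0 with hy | hy
  · simp [cG_nonpos _ y hy]
  · rw [cG_diff k hk j y hy]
    exact Finset.sum_nonneg fun m _ => mul_nonneg (by norm_num) (chi_nonneg _ (by omega) y hy.le)

lemma cG_diff_integrable (k : ℕ) (hk : 1 ≤ k) (j : ℕ) :
    IntegrableOn (fun y => cG k y - cG (k+2*j) y) (Ioi 0) := by
  refine (integrableOn_congr_fun (s := Ioi (0:ℝ)) (fun y hy => cG_diff k hk j y hy)
    measurableSet_Ioi).mpr ?_
  exact integrable_finsetSum _ fun m _ => (chi_integrable (k+2*m+2) (by omega)).const_mul 2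

lemma cG_diff_integral (k : ℕ) (hk : 1 ≤ k) (j : ℕ) :
    ∫ y in Ioi (0:ℝ), (cG k y - cG (k+2*j) y) = 2 * j := by
  rw [setIntegral_congr_fun measurableSet_Ioi (fun y hy => cG_diff k hk j y hy)]
  rw [integral_finsetSum _ fun m _ => (chi_integrable (k+2*m+2) (by omega)).const_mul 2]
  simp only [integral_const_mul]
  rw [Finset.sum_congr rfl fun m _ => by rw [chi_integral (k+2*m+2) (by omega)]]
  simp [mul_comm]

noncomputable def pw (l : ℝ) (i : ℕ) : ℝ := Real.exp (-l / 2) * (l / 2) ^ i / i.factorial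

lemma pw_nonneg (l : ℝ) (hl : 0 ≤ l) (i : ℕ) : 0 ≤ pw l i := by unfold pw; positivity

lemma pw_hasSum (l : ℝ) : HasSum (pw l) 1 := by
  have h := (NormedSpace.expSeries_div_hasSum_exp (l/2)).mul_left (Real.exp (-l/2))
  rw [← Real.exp_eq_exp_ℝ, ← Real.exp_add] at h
  have e : -l/2 + l/2 = 0 := by ring
  rw [e, Real.exp_zero] at h
  refine (hs_congr fun i => ?_).mpr (h)
  unfold pw
  ring

lemma pw_mean (l : ℝ) : HasSum (fun j : ℕ => pw l j * (2 * j)) l := by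
  rw [← hasSum_nat_add_iff' 1]
  have h := (pw_hasSum l).mul_left l
  simp only [Finset.range_one, Finset.sum_singleton, Nat.cast_zero, mul_zero, sub_zero]
  rw [mul_one] at h
  refine (hs_congr fun i => ?_).mpr (h)
  unfold pw
  rw [Nat.factorial_succ]
  push_cast
  have : (i.factorial : ℝ) ≠ 0 := by positivity
  have : (i:ℝ) + 1 ≠ 0 := by positivity
  field_simp
  ring

lemma pw_conv (a b : ℝ) (m : ℕ) :
    pw (a+b) m = ∑ p ∈ Finset.HasAntidiagonal.antidiagonal m, pw a p.1 * pw b p.2 := by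
  have e : (a+b)/2 = a/2+b/2 := by ring
  have e' : -(a+b)/2 = -a/2 + -b/2 := by ring
  unfold pw
  rw [e, e', Real.exp_add, (Commute.all (a/2) (b/2)).add_pow', Finset.mul_sum, Finset.sum_div]
  refine Finset.sum_congr rfl fun p hp => ?_
  rw [Finset.HasAntidiagonal.mem_antidiagonal] at hp
  subst hp
  have h : ((p.1+p.2).choose p.1 : ℝ) * p.1.factorial * p.2.factorial = (p.1+p.2).factorial := by
    rw [Nat.choose_symm_add]
    exact_mod_cast Nat.add_choose_mul_factorial_mul_factorial p.1 p.2
  have : (p.1.factorial : ℝ) ≠ 0 := by positivity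
  have : (p.2.factorial : ℝ) ≠ 0 := by positivity
  have : ((p.1+p.2).factorial : ℝ) ≠ 0 := by positivity
  rw [nsmul_eq_mul]
  field_simp
  rw [← h]; ring

lemma cdf_hasSum (n : ℕ) (hn : 1 ≤ n) (l : ℝ) (hl : 0 ≤ l) (y : ℝ) :
    HasSum (fun i => pw l i * cG (n+2*i) y) (ncChiSqCdf n l y) := by
  have hi : ∀ i, IntegrableOn (chiSqPdf (n+2*i)) (Ioc 0 y) := fun i =>
    (chi_integrable (n+2*i) (by omega)).mono_set Ioc_subset_Ioi_self
  have hs : Summable fun i => pw l i * cG (n+2*i) y :=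
    Summable.of_nonneg_of_le (fun i => mul_nonneg (pw_nonneg l hl i) (cG_nonneg _ (by omega) y))
      (fun i => mul_le_of_le_one_right (pw_nonneg l hl i) (cG_le_one _ (by omega) y))
      (pw_hasSum l).summable
  have := hasSum_integral_of_summable_integral_norm
    (μ := volume.restrict (Ioc 0 y)) (F := fun i t => pw l i * chiSqPdf (n+2*i) t)
    (fun i => (hi i).const_mul _) ?_
  · simp only [integral_const_mul] at this
    exact this
  · refine (summable_congr fun i => ?_).mpr hs
    unfold cG
    rw [← integral_const_mul]
    refine setIntegral_congr_fun measurableSet_Ioc fun t ht => ?_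
    exact Real.norm_of_nonneg (mul_nonneg (pw_nonneg l hl i) (chi_nonneg _ (by omega) t ht.1.le))

lemma cdf_diff_hasSum (n : ℕ) (hn : 1 ≤ n) (a b : ℝ) (ha : 0 ≤ a) (hb : 0 ≤ b) (y : ℝ) :
    HasSum (fun p : ℕ × ℕ => pw a p.1 * pw b p.2 * (cG (n+2*p.1) y - cG (n+2*p.1+2*p.2) y))
      (ncChiSqCdf n a y - ncChiSqCdf n (a+b) y) := by
  have hnn : ∀ p : ℕ × ℕ, 0 ≤ pw a p.1 * pw b p.2 := fun p =>
    mul_nonneg (pw_nonneg a ha _) (pw_nonneg b hb _)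
  have hab : Summable fun p : ℕ × ℕ => pw a p.1 * pw b p.2 :=
    (pw_hasSum a).summable.mul_of_nonneg (pw_hasSum b).summable (pw_nonneg a ha) (pw_nonneg b hb)
  have bnd : ∀ g : ℕ × ℕ → ℕ, (∀ p, 1 ≤ g p) →
      Summable fun p : ℕ × ℕ => pw a p.1 * pw b p.2 * cG (g p) y := fun g hg =>
    Summable.of_nonneg_of_le (fun p => mul_nonneg (hnn p) (cG_nonneg _ (hg p) y))
      (fun p => mul_le_of_le_one_right (hnn p) (cG_le_one _ (hg p) y)) hab
  have s1 := bnd (fun p => n+2*p.1) (fun p => by omega)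
  have s2 := bnd (fun p => n+2*p.1+2*p.2) (fun p => by omega)
  have h1 : HasSum (fun p : ℕ × ℕ => pw a p.1 * pw b p.2 * cG (n+2*p.1) y)
      (ncChiSqCdf n a y) := by
    have h := s1.hasSum.prod_fiberwise (g := fun i => pw a i * cG (n+2*i) y) (fun i => by
      have := (pw_hasSum b).mul_left (pw a i * cG (n+2*i) y)
      rw [mul_one] at this
      refine (hs_congr fun j => ?_).mpr (this)
      ring)
    rw [(cdf_hasSum n hn a ha y).unique h]
    exact s1.hasSum
  have h2 : HasSum (fun p : ℕ × ℕ => pw a p.1 * pw b p.2 * cG (n+2*p.1+2*p.2) y)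
      (ncChiSqCdf n (a+b) y) := by
    have h := (Finset.HasAntidiagonal.sigmaAntidiagonalEquivProd.hasSum_iff.2 s2.hasSum).sigma
      (g := fun m => pw (a+b) m * cG (n+2*m) y) (fun m => by
        have := hasSum_fintype (fun q : Finset.HasAntidiagonal.antidiagonal m =>
          pw a q.1.1 * pw b q.1.2 * cG (n+2*q.1.1+2*q.1.2) y)
        refine (congrArg (HasSum _) ?_).mpr this
        rw [pw_conv, Finset.sum_mul, ← Finset.sum_coe_sort]
        refine Finset.sum_congr rfl fun q _ => ?_
        have hq := Finset.HasAntidiagonal.mem_antidiagonal.1 q.2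
        have : n + 2*m = n+2*q.1.1+2*q.1.2 := by omega
        rw [this])
    rw [(cdf_hasSum n hn (a+b) (by positivity) y).unique h]
    exact s2.hasSum
  refine (hs_congr fun p => ?_).mpr (h1.sub h2)
  ring

lemma cdf_diff_integral (n : ℕ) (hn : 1 ≤ n) (a b : ℝ) (ha : 0 ≤ a) (hb : 0 ≤ b) :
    ∫ y in Ioi (0:ℝ), (ncChiSqCdf n a y - ncChiSqCdf n (a+b) y) = b := by
  have hnn : ∀ p : ℕ × ℕ, 0 ≤ pw a p.1 * pw b p.2 := fun p =>
    mul_nonneg (pw_nonneg a ha _) (pw_nonneg b hb _)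
  have hs : Summable fun p : ℕ × ℕ => pw a p.1 * (pw b p.2 * (2 * (p.2:ℝ))) :=
    (pw_hasSum a).summable.mul_of_nonneg (pw_mean b).summable (pw_nonneg a ha)
      (fun j => mul_nonneg (pw_nonneg b hb j) (by positivity))
  have hsum : HasSum (fun p : ℕ × ℕ => pw a p.1 * (pw b p.2 * (2 * (p.2:ℝ)))) b := by
    have := (pw_hasSum a).mul (pw_mean b) hs
    rwa [one_mul] at this
  have key := hasSum_integral_of_summable_integral_norm
    (μ := volume.restrict (Ioi (0:ℝ)))
    (F := fun (p : ℕ × ℕ) y => pw a p.1 * pw b p.2 * (cG (n+2*p.1) y - cG (n+2*p.1+2*p.2) y))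
    (fun p => (cG_diff_integrable _ (by omega) _).const_mul _) ?_
  · simp only [fun y => (cdf_diff_hasSum n hn a b ha hb y).tsum_eq] at key
    refine key.unique ?_
    refine (hs_congr fun p => ?_).mpr (hsum)
    rw [integral_const_mul, cG_diff_integral _ (by omega)]
    ring
  · refine (summable_congr fun p => ?_).mpr hs
    have : ∀ y, ‖pw a p.1 * pw b p.2 * (cG (n+2*p.1) y - cG (n+2*p.1+2*p.2) y)‖ =
        pw a p.1 * pw b p.2 * (cG (n+2*p.1) y - cG (n+2*p.1+2*p.2) y) := fun y =>
      Real.norm_of_nonneg (mul_nonneg (hnn p) (cG_diff_nonneg _ (by omega) _ y))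
    simp only [this]
    rw [integral_const_mul, cG_diff_integral _ (by omega)]
    ring

theorem cdf_difference_integral (n : ℕ) (hn : 1 ≤ n) (σ ρ₁ ρ₂ : ℝ)
    (hσ : 0 < σ) (hρ₂ : 0 ≤ ρ₂) (hρ : ρ₂ < ρ₁) :
    (∫ y in Set.Ioi (0 : ℝ),
        (ncChiSqCdf n (ρ₂ ^ 2 / σ ^ 2) y - ncChiSqCdf n (ρ₁ ^ 2 / σ ^ 2) y)) =
      (ρ₁ ^ 2 - ρ₂ ^ 2) / σ ^ 2 ∧
    ∀ y : ℝ, 0 ≤ ncChiSqCdf n (ρ₂ ^ 2 / σ ^ 2) y - ncChiSqCdf n (ρ₁ ^ 2 / σ ^ 2) y := by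
  have ha : 0 ≤ ρ₂ ^ 2 / σ ^ 2 := by positivity
  have hb : 0 ≤ (ρ₁ ^ 2 - ρ₂ ^ 2) / σ ^ 2 := by
    apply div_nonneg _ (by positivity)
    nlinarith
  have e : ρ₁ ^ 2 / σ ^ 2 = ρ₂ ^ 2 / σ ^ 2 + (ρ₁ ^ 2 - ρ₂ ^ 2) / σ ^ 2 := by ring
  rw [e]
  refine ⟨cdf_diff_integral n hn _ _ ha hb, fun y => ?_⟩
  refine (cdf_diff_hasSum n hn _ _ ha hb y).nonneg fun p => ?_
  exact mul_nonneg (mul_nonneg (pw_nonneg _ ha _) (pw_nonneg _ hb _))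
    (cG_diff_nonneg _ (by omega) _ y)
end

section
/- Let X_R be uniformly distributed on the sphere of radius R in ℝⁿ and Z ~ N(0, I_n) independent of X_R, and let Y = X_R + √s Z for s > 0. Then the conditional expectation satisfies E[X_R | Y = y] = (R y/‖y‖) h_{n/2}(‖y‖R/s), where h_{n/2} is the ratio I_{n/2}/I_{n/2−1} of modified Bessel functions of the first kind. -/
open MeasureTheory

/-- Uniform (surface/Hausdorff) measure on the sphere of radius `R` in `ℝⁿ`. -/
noncomputable def sphereMeasure (n : ℕ) (R : ℝ) : Measure (EuclideanSpace ℝ (Fin n)) :=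
  (MeasureTheory.Measure.hausdorffMeasure ((n : ℝ) - 1)).restrict
    (Metric.sphere (0 : EuclideanSpace ℝ (Fin n)) R)

section Helpers

lemma cms_hasSum_exp (x : ℝ) : HasSum (fun p : ℕ => x ^ p / p.factorial) (Real.exp x) := by
  rw [Real.exp_eq_exp_ℝ]
  exact NormedSpace.expSeries_div_hasSum_exp x

open Polynomial in
lemma cms_coeff (k : ℕ) : ((1 + X ^ 2 : ℝ[X]) ^ (k + 1)).coeff 2 = (k : ℝ) + 1 := by
  have h : (1 + X ^ 2 : ℝ[X]) ^ (k + 1) = expand ℝ 2 ((1 + X) ^ (k + 1)) := by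
    simp
  rw [h]
  have := coeff_expand_mul (R := ℝ) (p := 2) (by norm_num) ((1 + X) ^ (k + 1)) 1
  simp only [one_mul] at this
  rw [this, coeff_one_add_X_pow]
  simp

/-- comparison of second coefficients -/
lemma cms_poly (k : ℕ) (c : ℕ → ℝ) (m : ℝ)
    (h : ∀ t : ℝ, ∑ i ∈ Finset.range (2 * k + 3), t ^ i * c i * ((2 * k + 2).choose i : ℝ)
      = (1 + t ^ 2) ^ (k + 1) * m) :
    (2 * (k : ℝ) + 1) * c 2 = m := by
  have hp : (∑ i ∈ Finset.range (2 * k + 3),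
      Polynomial.monomial i (c i * ((2 * k + 2).choose i : ℝ)) : Polynomial ℝ)
      = (1 + Polynomial.X ^ 2) ^ (k + 1) * Polynomial.C m := by
    apply Polynomial.funext
    intro t
    have := h t
    simp only [Polynomial.eval_finsetSum, Polynomial.eval_monomial, Polynomial.eval_mul,
      Polynomial.eval_pow, Polynomial.eval_add, Polynomial.eval_one, Polynomial.eval_X,
      Polynomial.eval_C]
    rw [← this]
    apply Finset.sum_congr rfl
    intro i _
    ring
  have h2 := congrArg (fun p => Polynomial.coeff p 2) hp
  simp only [Polynomial.finsetSum_coeff, Polynomial.coeff_monomial, Polynomial.coeff_mul_C,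
    cms_coeff] at h2
  rw [Finset.sum_ite_eq' ] at h2
  rw [if_pos (by simp), Nat.cast_choose_two] at h2
  push_cast at h2
  have hk : (0 : ℝ) < (k : ℝ) + 1 := by positivity
  apply mul_left_cancel₀ hk.ne'
  rw [← h2]
  ring

variable {n : ℕ} {μ : Measure (EuclideanSpace ℝ (Fin n))} {R : ℝ}

lemma cms_integrable [IsFiniteMeasure μ] (hsup : ∀ᵐ x ∂μ, ‖x‖ = R)
    {F : Type*} [NormedAddCommGroup F] [SecondCountableTopology F]
    (f : EuclideanSpace ℝ (Fin n) → F) (hf : Continuous f) : Integrable f μ := by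
  obtain ⟨C, hC⟩ := (isCompact_sphere (0 : EuclideanSpace ℝ (Fin n)) R).exists_bound_of_continuousOn
    hf.continuousOn
  refine Integrable.of_bound hf.aestronglyMeasurable C ?_
  filter_upwards [hsup] with x hx
  exact hC x (by simpa using hx)

lemma cms_inv (hinv : ∀ L : EuclideanSpace ℝ (Fin n) ≃ₗᵢ[ℝ] EuclideanSpace ℝ (Fin n),
      MeasurePreserving L μ μ)
    (L : EuclideanSpace ℝ (Fin n) ≃ₗᵢ[ℝ] EuclideanSpace ℝ (Fin n))
    {F : Type*} [NormedAddCommGroup F] [NormedSpace ℝ F] (f : EuclideanSpace ℝ (Fin n) → F) :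
    ∫ x, f (L x) ∂μ = ∫ x, f x ∂μ :=
  (hinv L).integral_comp L.toHomeomorph.measurableEmbedding f

lemma cms_rot (hinv : ∀ L : EuclideanSpace ℝ (Fin n) ≃ₗᵢ[ℝ] EuclideanSpace ℝ (Fin n),
      MeasurePreserving L μ μ) (i : Fin n) (f : ℝ → ℝ) (y : EuclideanSpace ℝ (Fin n)) :
    ∫ x, f (inner ℝ y x) ∂μ = ∫ x, f (‖y‖ * x i) ∂μ := by
  set w : EuclideanSpace ℝ (Fin n) := ‖y‖ • EuclideanSpace.single i (1 : ℝ) with hw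
  have hn : ‖y‖ = ‖w‖ := by simp [hw, norm_smul]
  have hr := Submodule.reflection_sub hn
  rw [← cms_inv hinv (Submodule.reflection (Submodule.span ℝ {y - w})ᗮ)
    (fun x => f (inner ℝ y x))]
  congr 1
  ext x
  congr 1
  have h1 := LinearIsometryEquiv.inner_map_map
    (Submodule.reflection (Submodule.span ℝ {y - w})ᗮ) y
    ((Submodule.reflection (Submodule.span ℝ {y - w})ᗮ) x)
  rw [Submodule.reflection_reflection, hr] at h1
  rw [← h1, hw, inner_smul_left, EuclideanSpace.inner_single_left]
  simp

lemma cms_odd (hinv : ∀ L : EuclideanSpace ℝ (Fin n) ≃ₗᵢ[ℝ] EuclideanSpace ℝ (Fin n),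
      MeasurePreserving L μ μ) (i : Fin n) (p : ℕ) (hp : Odd p) :
    ∫ x, x i ^ p ∂μ = 0 := by
  have h := cms_inv hinv (LinearIsometryEquiv.neg ℝ) (fun x => x i ^ p)
  simp only [LinearIsometryEquiv.coe_neg, PiLp.neg_apply, hp.neg_pow, integral_neg] at h
  linarith

lemma cms_offdiag [IsFiniteMeasure μ] (hsup : ∀ᵐ x ∂μ, ‖x‖ = R)
    (hinv : ∀ L : EuclideanSpace ℝ (Fin n) ≃ₗᵢ[ℝ] EuclideanSpace ℝ (Fin n),
      MeasurePreserving L μ μ) (i j : Fin n) (hij : j ≠ i) (k : ℕ) :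
    (2 * (k : ℝ) + 1) * ∫ x, x i ^ (2 * k) * x j ^ 2 ∂μ = ∫ x, x i ^ (2 * k + 2) ∂μ := by
  have := cms_poly k (fun p => ∫ x, x i ^ (2 * k + 2 - p) * x j ^ p ∂μ)
    (∫ x, x i ^ (2 * k + 2) ∂μ) ?_
  · simpa using this
  intro t
  have h := cms_rot hinv i (fun z => z ^ (2 * k + 2))
    (EuclideanSpace.single i (1 : ℝ) + t • EuclideanSpace.single j (1 : ℝ))
  have hnorm : ‖(EuclideanSpace.single i (1 : ℝ) + t • EuclideanSpace.single j (1 : ℝ) :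
      EuclideanSpace ℝ (Fin n))‖ ^ 2 = 1 + t ^ 2 := by
    rw [norm_add_sq_real]
    simp [inner_smul_right, EuclideanSpace.inner_single_left, norm_smul, hij.symm]
  have hR : ∀ x : EuclideanSpace ℝ (Fin n),
    (‖(EuclideanSpace.single i (1 : ℝ) + t • EuclideanSpace.single j (1 : ℝ) :
      EuclideanSpace ℝ (Fin n))‖ * x i) ^ (2 * k + 2) = (1 + t ^ 2) ^ (k + 1) * x i ^ (2 * k + 2) := by
    intro x
    rw [mul_pow, show 2 * k + 2 = 2 * (k + 1) by ring, pow_mul, hnorm]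
  have hL : ∀ x : EuclideanSpace ℝ (Fin n),
    (inner ℝ (EuclideanSpace.single i (1 : ℝ) + t • EuclideanSpace.single j (1 : ℝ) :
      EuclideanSpace ℝ (Fin n)) x) ^ (2 * k + 2) =
      ∑ p ∈ Finset.range (2 * k + 3), (t ^ p * ((2 * k + 2).choose p : ℝ)) *
        (x i ^ (2 * k + 2 - p) * x j ^ p) := by
    intro x
    rw [inner_add_left, inner_smul_left, EuclideanSpace.inner_single_left,
      EuclideanSpace.inner_single_left, add_comm, add_pow]
    apply Finset.sum_congr rfl
    intro p _
    simp [mul_pow]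
    ring
  simp only [hR, hL] at h
  rw [integral_const_mul, integral_finsetSum] at h
  · simp only [integral_const_mul] at h
    rw [← h]
    apply Finset.sum_congr rfl
    intro p _
    ring
  · intro p _
    apply cms_integrable hsup
    fun_prop

lemma cms_rec [IsFiniteMeasure μ] (hsup : ∀ᵐ x ∂μ, ‖x‖ = R)
    (hinv : ∀ L : EuclideanSpace ℝ (Fin n) ≃ₗᵢ[ℝ] EuclideanSpace ℝ (Fin n),
      MeasurePreserving L μ μ) (i : Fin n) (k : ℕ) :
    ((n : ℝ) + 2 * k) * ∫ x, x i ^ (2 * k + 2) ∂μ =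
      (2 * (k : ℝ) + 1) * R ^ 2 * ∫ x, x i ^ (2 * k) ∂μ := by
  have h1 : ∑ j : Fin n, ∫ x, x i ^ (2 * k) * x j ^ 2 ∂μ = R ^ 2 * ∫ x, x i ^ (2 * k) ∂μ := by
    rw [← integral_finsetSum, ← integral_const_mul]
    · apply integral_congr_ae
      filter_upwards [hsup] with x hx
      rw [← Finset.mul_sum, ← EuclideanSpace.real_norm_sq_eq, hx, mul_comm]
    · intro p _
      apply cms_integrable hsup
      fun_prop
  rw [mul_assoc, ← h1, Finset.mul_sum, ← Finset.add_sum_erase _ _ (Finset.mem_univ i),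
    Finset.sum_congr rfl (g := fun _ => ∫ x, x i ^ (2 * k + 2) ∂μ)]
  · have hn : 0 < n := i.pos
    simp only [Finset.sum_const, Finset.card_erase_of_mem (Finset.mem_univ i), Finset.card_univ,
      Fintype.card_fin, nsmul_eq_mul, ← pow_add]
    rw [Nat.cast_sub (by omega)]
    push_cast
    ring
  · intro j hj
    exact cms_offdiag hsup hinv i j (Finset.ne_of_mem_erase hj) k

lemma cms_moment [IsFiniteMeasure μ] (hsup : ∀ᵐ x ∂μ, ‖x‖ = R)
    (hinv : ∀ L : EuclideanSpace ℝ (Fin n) ≃ₗᵢ[ℝ] EuclideanSpace ℝ (Fin n),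
      MeasurePreserving L μ μ) (i : Fin n) (k : ℕ) :
    ∫ x, x i ^ (2 * k) ∂μ = μ.real Set.univ * Real.Gamma ((n : ℝ) / 2) * R ^ (2 * k) *
      ((2 * k).factorial / (4 ^ k * k.factorial * Real.Gamma (k + (n : ℝ) / 2))) := by
  have hn : (0 : ℝ) < n := by exact_mod_cast i.pos
  induction k with
  | zero =>
    have : Real.Gamma ((n : ℝ) / 2) ≠ 0 := (Real.Gamma_pos_of_pos (by positivity)).ne'
    simp [this]
  | succ k ih =>
    have h := cms_rec hsup hinv i k
    rw [ih] at h
    have hp : (0 : ℝ) < (n : ℝ) + 2 * k := by positivity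
    apply mul_left_cancel₀ hp.ne'
    rw [show 2 * (k + 1) = 2 * k + 2 by ring, h]
    have hG : Real.Gamma (((k + 1 : ℕ) : ℝ) + (n : ℝ) / 2)
        = (k + (n : ℝ) / 2) * Real.Gamma (k + (n : ℝ) / 2) := by
      rw [← Real.Gamma_add_one (by positivity)]
      congr 1
      push_cast
      ring
    have hg : Real.Gamma (k + (n : ℝ) / 2) ≠ 0 := (Real.Gamma_pos_of_pos (by positivity)).ne'
    have hq : (k : ℝ) + (n : ℝ) / 2 ≠ 0 := by positivity
    have hq' : 2 * (k : ℝ) + (n : ℝ) ≠ 0 := by positivity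
    have hf : (k.factorial : ℝ) ≠ 0 := by positivity
    have hk1 : (k : ℝ) + 1 ≠ 0 := by positivity
    rw [hG, Nat.factorial_succ (2 * k + 1), Nat.factorial_succ (2 * k), Nat.factorial_succ k]
    push_cast
    field_simp
    ring

lemma cms_series [IsFiniteMeasure μ] (hsup : ∀ᵐ x ∂μ, ‖x‖ = R) (i : Fin n) (r : ℝ) (q : ℕ) :
    HasSum (fun p : ℕ => r ^ p / p.factorial * ∫ x, x i ^ (p + q) ∂μ)
      (∫ x, Real.exp (r * x i) * x i ^ q ∂μ) := by
  simp only [← integral_const_mul]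
  apply hasSum_integral_of_dominated_convergence
    (fun p _ => (|r| * R) ^ p / p.factorial * R ^ q)
  · intro p
    apply Continuous.aestronglyMeasurable
    fun_prop
  · intro p
    filter_upwards [hsup] with x hx
    have hxi : |x i| ≤ R := by
      rw [← hx]
      exact PiLp.norm_apply_le x i
    have h0 : 0 ≤ R := by rw [← hx]; positivity
    rw [Real.norm_eq_abs, abs_mul, abs_div, abs_pow, abs_pow, Nat.abs_cast, mul_pow, pow_add]
    calc |r| ^ p / p.factorial * (|x i| ^ p * |x i| ^ q)
        ≤ |r| ^ p / p.factorial * (R ^ p * R ^ q) := by gcongr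
      _ = _ := by ring
  · filter_upwards with x
    exact (Real.summable_pow_div_factorial _).mul_right _
  · exact integrable_const _
  · filter_upwards with x
    have := (cms_hasSum_exp (r * x i)).mul_right (x i ^ q)
    have e : (fun p : ℕ => r ^ p / p.factorial * x i ^ (p + q)) =
        fun p : ℕ => (r * x i) ^ p / p.factorial * x i ^ q := by
      funext p
      rw [mul_pow, pow_add]
      ring
    rw [e]
    exact this

lemma cms_exp [IsFiniteMeasure μ] (hsup : ∀ᵐ x ∂μ, ‖x‖ = R)
    (hinv : ∀ L : EuclideanSpace ℝ (Fin n) ≃ₗᵢ[ℝ] EuclideanSpace ℝ (Fin n),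
      MeasurePreserving L μ μ) (i : Fin n) (r : ℝ) (hr : 0 < r) (hR : 0 < R) :
    HasSum (fun k : ℕ => μ.real Set.univ * Real.Gamma ((n : ℝ) / 2) *
        (r * R / 2) ^ (1 - (n : ℝ) / 2) * ((r * R / 2) ^ (2 * (k : ℝ) + ((n : ℝ) / 2 - 1)) /
        (k.factorial * Real.Gamma ((k : ℝ) + ((n : ℝ) / 2 - 1) + 1))))
      (∫ x, Real.exp (r * x i) ∂μ) := by
  have h := cms_series hsup i r 0
  simp only [pow_zero, mul_one, add_zero] at h
  have hinj : Function.Injective (fun k : ℕ => 2 * k) := fun a b hab => by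
    simpa using hab
  rw [← hinj.hasSum_iff] at h
  · convert h using 2 with k
    simp only [Function.comp]
    rw [cms_moment hsup hinv]
    have hz : 0 < r * R / 2 := by positivity
    rw [show (k : ℝ) + ((n : ℝ) / 2 - 1) + 1 = k + (n : ℝ) / 2 by ring]
    have e : (r * R / 2) ^ (1 - (n : ℝ) / 2) * (r * R / 2) ^ (2 * (k : ℝ) + ((n : ℝ) / 2 - 1))
        = (r * R / 2) ^ (2 * k) := by
      rw [← Real.rpow_add hz, ← Real.rpow_natCast]
      congr 1
      push_cast
      ring
    rw [mul_assoc, ← mul_div_assoc ((r * R / 2) ^ (1 - (n : ℝ) / 2)), e, div_pow, mul_pow,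
      show (2 : ℝ) ^ (2 * k) = 4 ^ k by rw [pow_mul]; norm_num]
    have : ((2 * k).factorial : ℝ) ≠ 0 := by positivity
    field_simp
  · intro p hp
    have : Odd p := by
      rw [← Nat.not_even_iff_odd]
      rintro ⟨k, rfl⟩
      exact hp ⟨k, by simp; ring⟩
    rw [cms_odd hinv i p this, mul_zero]

lemma cms_exp1 [IsFiniteMeasure μ] (hsup : ∀ᵐ x ∂μ, ‖x‖ = R)
    (hinv : ∀ L : EuclideanSpace ℝ (Fin n) ≃ₗᵢ[ℝ] EuclideanSpace ℝ (Fin n),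
      MeasurePreserving L μ μ) (i : Fin n) (r : ℝ) (hr : 0 < r) (hR : 0 < R) :
    HasSum (fun k : ℕ => μ.real Set.univ * Real.Gamma ((n : ℝ) / 2) *
        (r * R / 2) ^ (1 - (n : ℝ) / 2) * R * ((r * R / 2) ^ (2 * (k : ℝ) + (n : ℝ) / 2) /
        (k.factorial * Real.Gamma ((k : ℝ) + (n : ℝ) / 2 + 1))))
      (∫ x, Real.exp (r * x i) * x i ∂μ) := by
  have h := cms_series hsup i r 1
  simp only [pow_one] at h
  have hinj : Function.Injective (fun k : ℕ => 2 * k + 1) := fun a b hab => by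
    simpa using hab
  rw [← hinj.hasSum_iff] at h
  · convert h using 2 with k
    simp only [Function.comp]
    rw [show 2 * k + 1 + 1 = 2 * (k + 1) by ring, cms_moment hsup hinv]
    have hz : 0 < r * R / 2 := by positivity
    rw [show (k : ℝ) + (n : ℝ) / 2 + 1 = (k + 1 : ℕ) + (n : ℝ) / 2 by push_cast; ring]
    have e : (r * R / 2) ^ (1 - (n : ℝ) / 2) * (r * R / 2) ^ (2 * (k : ℝ) + (n : ℝ) / 2)
        = (r * R / 2) ^ (2 * k + 1) := by
      rw [← Real.rpow_add hz, ← Real.rpow_natCast]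
      congr 1
      push_cast
      ring
    have e2 : ∀ a b c d f : ℝ, a * b * R * (c / d) = a * (b * c) * R / d := by
      intros; ring
    rw [e2 _ _ _ _ 0, e, div_pow, mul_pow, pow_succ 2 (2 * k),
      show (2 : ℝ) ^ (2 * k) = 4 ^ k by rw [pow_mul]; norm_num,
      show 2 * (k + 1) = 2 * k + 1 + 1 by ring, Nat.factorial_succ (2 * k + 1),
      Nat.factorial_succ k]
    have : ((2 * k + 1).factorial : ℝ) ≠ 0 := by positivity
    have hk1 : (k : ℝ) + 1 ≠ 0 := by positivity
    have hg : Real.Gamma ((k + 1 : ℕ) + (n : ℝ) / 2) ≠ 0 :=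
      (Real.Gamma_pos_of_pos (by positivity)).ne'
    push_cast at hg ⊢
    field_simp
    ring
  · intro p hp
    have : Odd (p + 1) := by
      rw [← Nat.not_even_iff_odd]
      rintro ⟨k, hk⟩
      exact hp ⟨k - 1, by simp; omega⟩
    rw [cms_odd hinv i _ this, mul_zero]

lemma cms_ratio [IsFiniteMeasure μ] (hsup : ∀ᵐ x ∂μ, ‖x‖ = R)
    (hinv : ∀ L : EuclideanSpace ℝ (Fin n) ≃ₗᵢ[ℝ] EuclideanSpace ℝ (Fin n),
      MeasurePreserving L μ μ) (i : Fin n) (r : ℝ) (hr : 0 < r) (hR : 0 < R) :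
    ∫ x, Real.exp (r * x i) * x i ∂μ =
      (∫ x, Real.exp (r * x i) ∂μ) * (R * besselRatio ((n : ℝ) / 2) (r * R)) := by
  have hn : (0 : ℝ) < n := by exact_mod_cast i.pos
  have h0 := cms_exp hsup hinv i r hr hR
  have h1 := cms_exp1 hsup hinv i r hr hR
  have e0 := h0.tsum_eq
  have e1 := h1.tsum_eq
  rw [tsum_mul_left] at e0 e1
  by_cases hM : μ.real Set.univ = 0
  · rw [← e1, ← e0, hM]
    simp
  have hG : 0 < Real.Gamma ((n : ℝ) / 2) := Real.Gamma_pos_of_pos (by positivity)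
  have hz : 0 < r * R / 2 := by positivity
  have hz' : 0 < (r * R / 2) ^ (1 - (n : ℝ) / 2) := by positivity
  have hA : μ.real Set.univ * Real.Gamma ((n : ℝ) / 2) * (r * R / 2) ^ (1 - (n : ℝ) / 2) ≠ 0 :=
    mul_ne_zero (mul_ne_zero hM hG.ne') hz'.ne'
  have hsum := (summable_mul_left_iff hA).1 h0.summable
  have hpos : ∀ k : ℕ, 0 < (r * R / 2) ^ (2 * (k : ℝ) + ((n : ℝ) / 2 - 1)) /
        (k.factorial * Real.Gamma ((k : ℝ) + ((n : ℝ) / 2 - 1) + 1)) := by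
    intro k
    have : 0 < Real.Gamma ((k : ℝ) + ((n : ℝ) / 2 - 1) + 1) := by
      apply Real.Gamma_pos_of_pos
      have : (0 : ℝ) < k + (n : ℝ) / 2 := by positivity
      linarith
    positivity
  have hI : 0 < besselI ((n : ℝ) / 2 - 1) (r * R) :=
    hsum.tsum_pos (fun k => (hpos k).le) 0 (hpos 0)
  rw [← e1, ← e0]
  change _ * besselI ((n : ℝ) / 2) (r * R) = _ * besselI ((n : ℝ) / 2 - 1) (r * R) * _
  unfold besselRatio
  generalize besselI ((n : ℝ) / 2 - 1) (r * R) = J at hI ⊢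
  field_simp

lemma cms_vec [IsFiniteMeasure μ] (hsup : ∀ᵐ x ∂μ, ‖x‖ = R)
    (hinv : ∀ L : EuclideanSpace ℝ (Fin n) ≃ₗᵢ[ℝ] EuclideanSpace ℝ (Fin n),
      MeasurePreserving L μ μ) (f : ℝ → ℝ) (hf : Continuous f) (y : EuclideanSpace ℝ (Fin n))
      (hy : y ≠ 0) :
    ∫ x, f (inner ℝ y x) • x ∂μ = ((∫ x, f (inner ℝ y x) * inner ℝ y x ∂μ) / ‖y‖ ^ 2) • y := by
  have hint : Integrable (fun x => f (inner ℝ y x) • x) μ :=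
    cms_integrable hsup _ (by fun_prop)
  set V := ∫ x, f (inner ℝ y x) • x ∂μ with hV
  have hyV : inner ℝ y V = ∫ x, f (inner ℝ y x) * inner ℝ y x ∂μ := by
    rw [hV, ← integral_inner hint]
    simp only [inner_smul_right]
  have hfix : Submodule.reflection (Submodule.span ℝ {y}) V = V := by
    have h := cms_inv hinv (Submodule.reflection (Submodule.span ℝ {y}))
      (fun x => f (inner ℝ y x) • x)
    rw [← hV] at h
    have h2 : ∀ x, inner ℝ y (Submodule.reflection (Submodule.span ℝ {y}) x) = inner ℝ y x := by
      intro x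
      have h1 := LinearIsometryEquiv.inner_map_map
        (Submodule.reflection (Submodule.span ℝ {y})) y x
      rwa [Submodule.reflection_mem_subspace_eq_self (Submodule.mem_span_singleton_self y)] at h1
    simp only [h2] at h
    rw [← h]
    conv_lhs => rw [h]
    rw [hV]
    have := ContinuousLinearMap.integral_comp_comm
      ((Submodule.reflection (Submodule.span ℝ {y})).toContinuousLinearEquiv.toContinuousLinearMap)
      hint
    simp only [map_smul] at this
    exact this.symm
  rw [Submodule.reflection_eq_self_iff, Submodule.mem_span_singleton] at hfix
  obtain ⟨a, ha⟩ := hfix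
  have hyn : ‖y‖ ≠ 0 := by simpa using hy
  rw [← hyV, ← ha, inner_smul_right, real_inner_self_eq_norm_sq]
  congr 1
  field_simp

lemma cms_final [IsFiniteMeasure μ] (hsup : ∀ᵐ x ∂μ, ‖x‖ = R)
    (hinv : ∀ L : EuclideanSpace ℝ (Fin n) ≃ₗᵢ[ℝ] EuclideanSpace ℝ (Fin n),
      MeasurePreserving L μ μ) (hn : 0 < n) (s : ℝ) (hR : 0 < R) (hs : 0 < s)
    (y : EuclideanSpace ℝ (Fin n)) (hy : y ≠ 0) :
    (∫ x, Real.exp (-‖y - x‖ ^ 2 / (2 * s)) • x ∂μ) =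
      ((∫ x, Real.exp (-‖y - x‖ ^ 2 / (2 * s)) ∂μ) *
        ((R / ‖y‖) * besselRatio ((n : ℝ) / 2) (‖y‖ * R / s))) • y := by
  have hyn : 0 < ‖y‖ := by simpa using hy
  set c := Real.exp (-(‖y‖ ^ 2 + R ^ 2) / (2 * s)) with hc
  have he : ∀ᵐ x ∂μ, Real.exp (-‖y - x‖ ^ 2 / (2 * s)) = c * Real.exp (inner ℝ y x / s) := by
    filter_upwards [hsup] with x hx
    rw [hc, ← Real.exp_add, norm_sub_sq_real, hx]
    congr 1
    field_simp
    ring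
  have h1 : (∫ x, Real.exp (-‖y - x‖ ^ 2 / (2 * s)) • x ∂μ)
      = c • ∫ x, Real.exp (inner ℝ y x / s) • x ∂μ := by
    rw [← integral_smul]
    apply integral_congr_ae
    filter_upwards [he] with x hx
    rw [hx, smul_smul]
  have h2 : (∫ x, Real.exp (-‖y - x‖ ^ 2 / (2 * s)) ∂μ)
      = c * ∫ x, Real.exp (inner ℝ y x / s) ∂μ := by
    rw [← integral_const_mul]
    exact integral_congr_ae he
  let i : Fin n := ⟨0, hn⟩
  rw [h1, h2, cms_vec hsup hinv (fun z => Real.exp (z / s)) (by fun_prop) y hy, smul_smul]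
  congr 1
  rw [cms_rot hinv i (fun z => Real.exp (z / s)) y,
    cms_rot hinv i (fun z => Real.exp (z / s) * z) y]
  have h3 := cms_ratio hsup hinv i (‖y‖ / s) (by positivity) hR
  have e1 : ∀ x : EuclideanSpace ℝ (Fin n), Real.exp (‖y‖ * x i / s) * (‖y‖ * x i) =
      ‖y‖ * (Real.exp (‖y‖ / s * x i) * x i) := by
    intro x
    rw [show ‖y‖ * x i / s = ‖y‖ / s * x i by ring]
    ring
  have e2 : ∀ x : EuclideanSpace ℝ (Fin n), Real.exp (‖y‖ * x i / s) =
      Real.exp (‖y‖ / s * x i) := by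
    intro x
    rw [show ‖y‖ * x i / s = ‖y‖ / s * x i by ring]
  simp only [e1]
  simp only [e2]
  rw [integral_const_mul, h3, show ‖y‖ / s * R = ‖y‖ * R / s by ring]
  field_simp

end Helpers

/-- Bayes-rule form of `E[X_R | Y = y]` for `X_R` uniform on the sphere of radius `R`
and `Y = X_R + √s Z` with Gaussian noise of variance `s`. -/
theorem conditional_mean_on_sphere (n : ℕ) (hn : 0 < n) (R s : ℝ) (hR : 0 < R) (hs : 0 < s)
    (y : EuclideanSpace ℝ (Fin n)) (hy : y ≠ 0) :
    (∫ x, Real.exp (-‖y - x‖ ^ 2 / (2 * s)) • x ∂(sphereMeasure n R)) =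
      ((∫ x, Real.exp (-‖y - x‖ ^ 2 / (2 * s)) ∂(sphereMeasure n R)) *
        ((R / ‖y‖) * besselRatio ((n : ℝ) / 2) (‖y‖ * R / s))) • y := by
  have hsup : ∀ᵐ x ∂(sphereMeasure n R), ‖x‖ = R := by
    unfold sphereMeasure
    filter_upwards [ae_restrict_mem Metric.isClosed_sphere.measurableSet] with x hx
    simpa using hx
  by_cases hfin : IsFiniteMeasure (sphereMeasure n R)
  · refine cms_final hsup ?_ hn s hR hs y hy
    intro L
    have h := (L.toIsometryEquiv.measurePreserving_hausdorffMeasure ((n : ℝ) - 1)).restrict_preimage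
      (s := Metric.sphere (0 : EuclideanSpace ℝ (Fin n)) R) Metric.isClosed_sphere.measurableSet
    have hpre : L.toIsometryEquiv ⁻¹' (Metric.sphere (0 : EuclideanSpace ℝ (Fin n)) R)
        = Metric.sphere (0 : EuclideanSpace ℝ (Fin n)) R := by
      ext x
      simp
    rw [hpre] at h
    exact h
  · -- infinite total mass: neither side is integrable (this case is in fact vacuous)
    have key : ∀ᵐ x ∂(sphereMeasure n R), Real.exp (-(‖y‖ + R) ^ 2 / (2 * s)) ≤
        Real.exp (-‖y - x‖ ^ 2 / (2 * s)) := by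
      filter_upwards [hsup] with x hx
      have : ‖y - x‖ ≤ ‖y‖ + R := hx ▸ norm_sub_le y x
      gcongr
    have hc : Real.exp (-(‖y‖ + R) ^ 2 / (2 * s)) ≠ 0 := (Real.exp_pos _).ne'
    have hni : ¬ Integrable (fun x => Real.exp (-‖y - x‖ ^ 2 / (2 * s))) (sphereMeasure n R) := by
      intro hi
      apply hfin
      have : Integrable (fun _ => Real.exp (-(‖y‖ + R) ^ 2 / (2 * s))) (sphereMeasure n R) := by
        refine hi.mono aestronglyMeasurable_const ?_
        filter_upwards [key] with x hx
        simpa only [Real.norm_eq_abs, Real.abs_exp] using hx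
      exact (integrable_const_iff_isFiniteMeasure hc).1 this
    have hni2 : ¬ Integrable (fun x => Real.exp (-‖y - x‖ ^ 2 / (2 * s)) • x)
        (sphereMeasure n R) := by
      intro hi
      apply hni
      have h2 := hi.norm.const_mul R⁻¹
      refine h2.congr ?_
      filter_upwards [hsup] with x hx
      rw [norm_smul, hx, Real.norm_eq_abs, Real.abs_exp]
      field_simp
    rw [integral_undef hni, integral_undef hni2]
    simp
end

section
/- Let X_R be uniform on the sphere of radius R in ℝⁿ and Z a standard Gaussian in ℝⁿ independent of X_R; for s > 0 set Y = X_R + √s Z. Then the conditional-mean estimator error has E[‖X_R − E[X_R|Y]‖². | fixed input x with ‖x‖ = R] = R² − R² E[h_{n/2}²(‖x + √s Z‖R/s)], i.e., for any x with ‖x‖ = R, E[‖x − (R(x+√sZ)/‖x+√sZ‖) h_{n/2}(‖x+√sZ‖R/s)‖²] = R² − R² E[h_{n/2}²(‖x+√sZ‖R/s)]. -/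
open MeasureTheory ProbabilityTheory

open Set Metric in
lemma cme_pi_density (n : ℕ) : (Measure.pi fun _ : Fin n => gaussianReal 0 1) =
    (volume : Measure (Fin n → ℝ)).withDensity
      (fun z => ENNReal.ofReal (∏ i, gaussianPDFReal 0 1 (z i))) := by
  refine Measure.pi_eq fun s hs => ?_
  rw [withDensity_apply _ (MeasurableSet.univ_pi hs), volume_pi, Measure.restrict_pi_pi,
    ← ofReal_integral_eq_lintegral_ofReal, integral_fintype_prod_eq_prod,
    ENNReal.ofReal_prod_of_nonneg]
  · refine Finset.prod_congr rfl fun i _ => ?_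
    rw [gaussianReal_apply_eq_integral _ (by simp)]
  · intro i _
    exact integral_nonneg fun _ => gaussianPDFReal_nonneg _ _ _
  · exact Integrable.fintype_prod fun i => (integrable_gaussianPDFReal 0 1).restrict
  · exact Filter.Eventually.of_forall fun z => Finset.prod_nonneg fun i _ => gaussianPDFReal_nonneg _ _ _

lemma cme_prod_pdf (n : ℕ) (z : Fin n → ℝ) : ∏ i, gaussianPDFReal 0 1 (z i) =
    (Real.sqrt (2 * Real.pi))⁻¹ ^ n * Real.exp (-(∑ i, z i ^ 2) / 2) := by
  simp only [gaussianPDFReal, Finset.prod_mul_distrib, ← Real.exp_sum]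
  simp [Finset.sum_div, neg_div]

/-- Gaussian integral as a Lebesgue integral on Euclidean space. -/
lemma cme_gauss_integral (n : ℕ) (F : EuclideanSpace ℝ (Fin n) → ℝ) :
    ∫ z, F (WithLp.toLp 2 z) ∂(Measure.pi fun _ : Fin n => gaussianReal 0 1) =
    (Real.sqrt (2 * Real.pi))⁻¹ ^ n *
      ∫ y : EuclideanSpace ℝ (Fin n), F y * Real.exp (-‖y‖ ^ 2 / 2) := by
  rw [cme_pi_density, integral_withDensity_eq_integral_toReal_smul]
  · rw [← (PiLp.volume_preserving_toLp (Fin n)).integral_comp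
      (MeasurableEquiv.toLp 2 _).measurableEmbedding, ← integral_const_mul]
    refine integral_congr_ae (Filter.Eventually.of_forall fun z => ?_)
    simp only
    rw [ENNReal.toReal_ofReal (Finset.prod_nonneg fun i _ => gaussianPDFReal_nonneg _ _ _),
      cme_prod_pdf, EuclideanSpace.norm_sq_eq]
    simp
    ring
  · exact ENNReal.measurable_ofReal.comp (Finset.measurable_prod _ fun i _ =>
      (measurable_gaussianPDFReal 0 1).comp (measurable_pi_apply i))
  · exact Filter.Eventually.of_forall fun _ => by simp

open Set Metric in
lemma cme_polar {E : Type*} [NormedAddCommGroup E] [InnerProductSpace ℝ E] [MeasurableSpace E]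
    [Nontrivial E] [FiniteDimensional ℝ E] [BorelSpace E] (μ : Measure E) [μ.IsAddHaarMeasure]
    (F : E → ℝ) :
    ∫ y, F y ∂μ = ∫ p : sphere (0 : E) 1 × Ioi (0 : ℝ), F ((p.2 : ℝ) • (p.1 : E))
      ∂(μ.toSphere.prod (.volumeIoiPow (Module.finrank ℝ E - 1))) := by
  rw [← μ.measurePreserving_homeomorphUnitSphereProd.integral_comp
        (Homeomorph.measurableEmbedding _)]
  rw [← restrict_compl_singleton (μ := μ) 0, 
    ← integral_subtype_comap (measurableSet_singleton _).compl F, restrict_compl_singleton]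
  refine integral_congr_ae (Filter.Eventually.of_forall fun z => ?_)
  simp only
  congr 1
  have := homeomorphUnitSphereProd_symm_apply_coe E (homeomorphUnitSphereProd E z)
  rw [Homeomorph.symm_apply_apply] at this
  exact this

open Set Metric in
lemma cme_radial (N m : ℕ) :
    ∫ r : Ioi (0 : ℝ), (r : ℝ) ^ m * Real.exp (-(r : ℝ) ^ 2 / 2) ∂(Measure.volumeIoiPow N) =
      2 ^ (((N : ℝ) + m + 1) / 2 - 1) * Real.Gamma (((N : ℝ) + m + 1) / 2) := by
  simp only [Measure.volumeIoiPow, ENNReal.ofReal]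
  rw [integral_withDensity_eq_integral_smul,
        integral_subtype_comap measurableSet_Ioi fun a : ℝ ↦ Real.toNNReal (a ^ N) •
          (a ^ m * Real.exp (-a ^ 2 / 2))]
  · have := integral_rpow_mul_exp_neg_mul_rpow (p := 2) (q := (N : ℝ) + m) (b := 1 / 2)
      (by norm_num) (by linarith [Nat.cast_nonneg (α := ℝ) N, Nat.cast_nonneg (α := ℝ) m])
      (by norm_num)
    rw [setIntegral_congr_fun measurableSet_Ioi (g := fun x : ℝ =>
      x ^ ((N : ℝ) + m) * Real.exp (-(1 / 2) * x ^ (2 : ℝ))) fun x hx ↦ ?_, this]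
    · rw [one_div, Real.inv_rpow (by norm_num), ← Real.rpow_neg (by norm_num),
        Real.rpow_sub_one (by norm_num)]
      ring_nf
    · simp only
      rw [NNReal.smul_def, Real.coe_toNNReal _ (pow_nonneg (le_of_lt hx) _), smul_eq_mul,
        ← Nat.cast_add, Real.rpow_natCast, pow_add, mul_assoc, Real.rpow_two]
      congr 3
      ring
  · exact (measurable_subtype_coe.pow_const _).real_toNNReal

lemma cme_gauss_moment_odd (k : ℕ) : ∫ t, t ^ (2 * k + 1) ∂(gaussianReal 0 1) = 0 := by
  have h : ∫ t, t ^ (2 * k + 1) ∂((gaussianReal 0 1).map (fun x => -x)) =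
      ∫ t, (-t) ^ (2 * k + 1) ∂(gaussianReal 0 1) :=
    integral_map (by fun_prop) (by fun_prop)
  rw [gaussianReal_map_neg, neg_zero] at h
  simp only [Odd.neg_pow ⟨k, rfl⟩, integral_neg] at h
  linarith

lemma cme_gauss_moment_even (k : ℕ) : ∫ t, t ^ (2 * k) ∂(gaussianReal 0 1) =
    2 ^ k * Real.Gamma (k + 1 / 2) / Real.sqrt Real.pi := by
  rw [integral_gaussianReal_eq_integral_smul (by simp)]
  have h1 : ∀ x : ℝ, gaussianPDFReal 0 1 x • x ^ (2 * k) =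
      (fun a : ℝ => (Real.sqrt (2 * Real.pi))⁻¹ * (a ^ (2 * (k : ℝ)) * Real.exp (-(1 / 2) * a ^ (2 : ℝ)))) |x| := by
    intro x
    simp only [gaussianPDFReal, smul_eq_mul]
    have : |x| ^ (2 * (k : ℝ)) = x ^ (2 * k) := by
      rw [show 2 * (k : ℝ) = ((2 * k : ℕ) : ℝ) by push_cast; ring, Real.rpow_natCast, pow_mul, pow_mul,
        sq_abs]
    rw [this, Real.rpow_two, sq_abs]
    simp
    rw [show -x ^ 2 / 2 = -(2⁻¹ * x ^ 2) by ring]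
    ring
  rw [integral_congr_ae (Filter.Eventually.of_forall h1), integral_comp_abs (f := fun a : ℝ => (Real.sqrt (2 * Real.pi))⁻¹ *
      (a ^ (2 * (k : ℝ)) * Real.exp (-(1 / 2) * a ^ (2 : ℝ)))), integral_const_mul, integral_rpow_mul_exp_neg_mul_rpow (by norm_num)
     (by linarith [Nat.cast_nonneg (α := ℝ) k]) (by norm_num)]
  rw [one_div, Real.inv_rpow (by norm_num), ← Real.rpow_neg (by norm_num),
    show -(-(2 * (k : ℝ) + 1) / 2) = k + 1 / 2 by ring, Real.rpow_add (by norm_num),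
    Real.rpow_natCast, ← Real.sqrt_eq_rpow, Real.sqrt_mul (by norm_num),
    show (2 * (k : ℝ) + 1) / 2 = k + 1 / 2 by ring]
  have : Real.sqrt Real.pi ≠ 0 := by positivity
  have : Real.sqrt 2 ≠ 0 := by positivity
  field_simp

lemma cme_Gamma_half (k : ℕ) : Real.Gamma (k + 1 / 2) * (4 ^ k * k.factorial) =
    (2 * k).factorial * Real.sqrt Real.pi := by
  induction k with
  | zero => simp [Real.Gamma_one_half_eq, -one_div]
  | succ k ih =>
    rw [show ((k + 1 : ℕ) : ℝ) + 1 / 2 = (k + 1 / 2) + 1 by push_cast; ring,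
      Real.Gamma_add_one (by positivity), show 2 * (k + 1) = (2 * k + 1) + 1 by ring,
      Nat.factorial_succ, Nat.factorial_succ, Nat.factorial_succ]
    push_cast
    linear_combination (4 * ((k : ℝ) + 1 / 2) * (k + 1)) * ih

/-- one-dimensional marginals -/
lemma cme_marginal {n : ℕ} (u : EuclideanSpace ℝ (Fin n)) (hu : ‖u‖ = 1) (m : ℕ) :
    ∫ z, (inner ℝ u (WithLp.toLp 2 z)) ^ m ∂(Measure.pi fun _ : Fin n => gaussianReal 0 1) =
      ∫ t, t ^ m ∂(gaussianReal 0 1) := by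
  have h1 : (ProbabilityTheory.stdGaussian (EuclideanSpace ℝ (Fin n))).map (innerSL ℝ u) =
      gaussianReal 0 1 := by
    rw [IsGaussian.map_eq_gaussianReal, integral_strongDual_stdGaussian,
      variance_dual_stdGaussian, innerSL_apply_norm, hu]
    simp
  have h2 : ∫ t, t ^ m ∂(gaussianReal 0 1) = ∫ t, t ^ m
      ∂((ProbabilityTheory.stdGaussian (EuclideanSpace ℝ (Fin n))).map (innerSL ℝ u)) := by
    rw [h1]
  rw [h2, integral_map (by fun_prop) (by fun_prop), ← map_pi_eq_stdGaussian,
    integral_map (by fun_prop) (by fun_prop)]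
  simp

/-- Surface measure on the unit sphere. -/
noncomputable abbrev cmeSig (n : ℕ) :
    Measure (Metric.sphere (0 : EuclideanSpace ℝ (Fin n)) 1) :=
  (volume : Measure (EuclideanSpace ℝ (Fin n))).toSphere

/-- Moments of a coordinate on the sphere. -/
noncomputable def cmeM {n : ℕ} (u : EuclideanSpace ℝ (Fin n)) (m : ℕ) : ℝ :=
  ∫ θ, (inner ℝ u (θ : EuclideanSpace ℝ (Fin n))) ^ m ∂(cmeSig n)

lemma cme_nontriv {n : ℕ} (hn : 0 < n) : Nontrivial (EuclideanSpace ℝ (Fin n)) := by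
  have : Nonempty (Fin n) := ⟨⟨0, hn⟩⟩
  infer_instance

lemma cme_M_eq {n : ℕ} (hn : 0 < n) (u : EuclideanSpace ℝ (Fin n)) (hu : ‖u‖ = 1) (m : ℕ) :
    cmeM u m * (2 ^ (((n : ℝ) + m) / 2 - 1) * Real.Gamma (((n : ℝ) + m) / 2)) =
      Real.sqrt (2 * Real.pi) ^ n * ∫ t, t ^ m ∂(gaussianReal 0 1) := by
  have := cme_nontriv hn
  rw [← cme_marginal u hu m, cme_gauss_integral n (fun y => (inner ℝ u y) ^ m), cme_polar]
  have h0 : Real.sqrt (2 * Real.pi) ≠ 0 := by positivity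
  rw [← mul_assoc (Real.sqrt (2 * Real.pi) ^ n), ← mul_pow, mul_inv_cancel₀ h0, one_pow, one_mul]
  have hr := cme_radial (n - 1) m
  have hc : ((n - 1 : ℕ) : ℝ) + m + 1 = n + m := by
    rw [Nat.cast_pred hn]; ring
  rw [hc] at hr
  rw [← hr, cmeM, ← integral_prod_mul (fun θ : Metric.sphere (0 : EuclideanSpace ℝ (Fin n)) 1 =>
    (inner ℝ u (θ : EuclideanSpace ℝ (Fin n))) ^ m), finrank_euclideanSpace_fin]
  refine integral_congr_ae (Filter.Eventually.of_forall fun p => ?_)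
  have h1 : ‖(p.1 : EuclideanSpace ℝ (Fin n))‖ = 1 := by simpa using p.1.2
  have h2 : (0 : ℝ) < p.2 := p.2.2
  simp only [inner_smul_right, norm_smul, h1, mul_one, Real.norm_eq_abs, sq_abs]
  ring

lemma cme_M_odd {n : ℕ} (hn : 0 < n) (u : EuclideanSpace ℝ (Fin n)) (hu : ‖u‖ = 1) (k : ℕ) :
    cmeM u (2 * k + 1) = 0 := by
  have h := cme_M_eq hn u hu (2 * k + 1)
  rw [cme_gauss_moment_odd, mul_zero] at h
  have : (0 : ℝ) < n := by exact_mod_cast hn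
  have h2 : Real.Gamma (((n : ℝ) + (2 * k + 1 : ℕ)) / 2) ≠ 0 :=
    (Real.Gamma_pos_of_pos (by positivity)).ne'
  refine (mul_eq_zero.1 h).resolve_right (mul_ne_zero (by positivity) h2)

lemma cme_M_even {n : ℕ} (hn : 0 < n) : ∃ C : ℝ, 0 < C ∧
    ∀ (u : EuclideanSpace ℝ (Fin n)) (_ : ‖u‖ = 1) (k : ℕ),
    cmeM u (2 * k) / (2 * k).factorial =
      C / (4 ^ k * k.factorial * Real.Gamma (k + (n : ℝ) / 2)) := by
  have hn' : (0 : ℝ) < n := by exact_mod_cast hn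
  refine ⟨Real.sqrt (2 * Real.pi) ^ n / 2 ^ ((n : ℝ) / 2 - 1), by positivity, fun u hu k => ?_⟩
  have h := cme_M_eq hn u hu (2 * k)
  have hG := cme_Gamma_half k
  rw [cme_gauss_moment_even] at h
  have e1 : ((n : ℝ) + (2 * k : ℕ)) / 2 = k + (n : ℝ) / 2 := by push_cast; ring
  rw [e1, add_sub_assoc, Real.rpow_add (by norm_num), Real.rpow_natCast] at h
  have h2 : Real.Gamma (k + (n : ℝ) / 2) ≠ 0 := (Real.Gamma_pos_of_pos (by positivity)).ne'
  have h3 : (2 : ℝ) ^ ((n : ℝ) / 2 - 1) ≠ 0 := by positivity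
  have h4 : Real.sqrt Real.pi ≠ 0 := by positivity
  set G := Real.Gamma (k + (n : ℝ) / 2)
  set T := (2 : ℝ) ^ ((n : ℝ) / 2 - 1)
  set S := Real.sqrt (2 * Real.pi) ^ n
  set D := Real.Gamma ((k : ℝ) + 1 / 2)
  have h5 : cmeM u (2 * k) * T * G * Real.sqrt Real.pi = S * D := by
    have : (2 : ℝ) ^ k ≠ 0 := by positivity
    apply mul_left_cancel₀ this
    field_simp at h
    linear_combination (2 : ℝ) ^ k * h
  have h6 : ((2 * k).factorial : ℝ) ≠ 0 := by positivity
  have h7 : (k.factorial : ℝ) ≠ 0 := by positivity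
  rw [div_eq_div_iff h6 (by positivity), div_mul_eq_mul_div, eq_div_iff h3]
  apply mul_right_cancel₀ h4
  linear_combination (4 ^ k * k.factorial : ℝ) * h5 + S * hG

lemma cme_inner_le {n : ℕ} {u : EuclideanSpace ℝ (Fin n)} (hu : ‖u‖ = 1)
    (θ : Metric.sphere (0 : EuclideanSpace ℝ (Fin n)) 1) :
    |inner ℝ u (θ : EuclideanSpace ℝ (Fin n))| ≤ 1 := by
  have h1 : ‖(θ : EuclideanSpace ℝ (Fin n))‖ = 1 := by simpa using θ.2
  have := abs_real_inner_le_norm u (θ : EuclideanSpace ℝ (Fin n))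
  rwa [hu, h1, mul_one] at this

/-- Weighted exponential integral over the sphere. -/
noncomputable def cmeA {n : ℕ} (u : EuclideanSpace ℝ (Fin n)) (j : ℕ) (t : ℝ) : ℝ :=
  ∫ θ, (inner ℝ u (θ : EuclideanSpace ℝ (Fin n))) ^ j *
    Real.exp (t * inner ℝ u (θ : EuclideanSpace ℝ (Fin n))) ∂(cmeSig n)

lemma cme_intble {n : ℕ} (f : Metric.sphere (0 : EuclideanSpace ℝ (Fin n)) 1 → ℝ)
    (hf : Continuous f) : Integrable f (cmeSig n) :=
  hf.integrable_of_hasCompactSupport (HasCompactSupport.of_compactSpace f)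

lemma cme_A_hasSum {n : ℕ} (u : EuclideanSpace ℝ (Fin n)) (hu : ‖u‖ = 1)
    (j : ℕ) (t : ℝ) :
    HasSum (fun m : ℕ => t ^ m / m.factorial * cmeM u (m + j)) (cmeA u j t) := by
  have key := hasSum_integral_of_summable_integral_norm (μ := cmeSig n)
    (F := fun (m : ℕ) θ => t ^ m / m.factorial *
      (inner ℝ u (θ : EuclideanSpace ℝ (Fin n))) ^ (m + j)) 
    (fun m => cme_intble _ (by fun_prop)) ?_
  · have e1 : (fun m : ℕ => t ^ m / m.factorial * cmeM u (m + j)) = fun m : ℕ =>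
        ∫ θ, t ^ m / m.factorial *
          (inner ℝ u (θ : EuclideanSpace ℝ (Fin n))) ^ (m + j) ∂(cmeSig n) := by
      funext m
      rw [integral_const_mul, cmeM]
    have e2 : cmeA u j t = ∫ θ, ∑' m : ℕ, t ^ m / m.factorial *
          (inner ℝ u (θ : EuclideanSpace ℝ (Fin n))) ^ (m + j) ∂(cmeSig n) := by
      rw [cmeA]
      refine integral_congr_ae (Filter.Eventually.of_forall fun θ => ?_)
      simp only
      rw [Real.exp_eq_exp_ℝ, NormedSpace.exp_eq_tsum_div, ← tsum_mul_left]
      refine tsum_congr fun m => ?_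
      rw [mul_pow, pow_add]
      ring
    rw [e1, e2]
    exact key
  · refine Summable.of_nonneg_of_le (fun m => by positivity) (fun m => ?_)
      ((Real.summable_pow_div_factorial |t|).mul_right ((cmeSig n).real Set.univ))
    calc _ ≤ ∫ θ, |t| ^ m / m.factorial ∂(cmeSig n) := by
            refine integral_mono (cme_intble _ (by fun_prop)) (integrable_const _) fun θ => ?_
            simp only [norm_mul, norm_div, norm_pow, Real.norm_eq_abs]
            rw [Nat.abs_cast]
            exact mul_le_of_le_one_right (by positivity) 
              (pow_le_one₀ (abs_nonneg _) (cme_inner_le hu θ))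
         _ = _ := by simp [mul_comm]

lemma cme_A_pos {n : ℕ} (hn : 0 < n) (u : EuclideanSpace ℝ (Fin n)) (t : ℝ) :
    0 < cmeA u 0 t := by
  have := cme_nontriv hn
  have : NeZero (cmeSig n) := ⟨Measure.toSphere_ne_zero _⟩
  rw [cmeA]
  simp only [pow_zero, one_mul]
  exact integral_exp_pos (cme_intble _ (by fun_prop))

lemma cme_A_le {n : ℕ} (u : EuclideanSpace ℝ (Fin n)) (hu : ‖u‖ = 1) (t : ℝ) :
    |cmeA u 1 t| ≤ cmeA u 0 t := by
  rw [cmeA, cmeA]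
  refine (abs_integral_le_integral_abs).trans ?_
  refine integral_mono (cme_intble _ (by fun_prop)) (cme_intble _ (by fun_prop)) fun θ => ?_
  simp only [pow_zero, one_mul, pow_one, abs_mul, Real.abs_exp]
  exact mul_le_of_le_one_left (by positivity) (cme_inner_le hu θ)

lemma cme_A_cont {n : ℕ} (u : EuclideanSpace ℝ (Fin n)) (j : ℕ) :
    Continuous (cmeA u j) := by
  unfold cmeA
  have := continuous_parametric_integral_of_continuous (μ := cmeSig n)
    (f := fun (t : ℝ) (θ : Metric.sphere (0 : EuclideanSpace ℝ (Fin n)) 1) =>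
      (inner ℝ u (θ : EuclideanSpace ℝ (Fin n))) ^ j *
      Real.exp (t * inner ℝ u (θ : EuclideanSpace ℝ (Fin n)))) (s := Set.univ)
      (by unfold Function.uncurry; fun_prop) isCompact_univ
  simpa using this

lemma cme_bessel_ratio {n : ℕ} (hn : 0 < n) (u : EuclideanSpace ℝ (Fin n)) (hu : ‖u‖ = 1)
    (t : ℝ) (ht : 0 < t) : besselRatio ((n : ℝ) / 2) t = cmeA u 1 t / cmeA u 0 t := by
  obtain ⟨C, hC, hM⟩ := cme_M_even hn
  have hn' : (0 : ℝ) < n := by exact_mod_cast hn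
  have ht2 : 0 < t / 2 := by positivity
  have i0 : Function.Injective (fun k : ℕ => 2 * k) := fun a b h => by simpa using h
  have i1 : Function.Injective (fun k : ℕ => 2 * k + 1) := fun a b h => by simpa using h
  have B0 : besselI ((n : ℝ) / 2 - 1) t = (t / 2) ^ ((n : ℝ) / 2 - 1) / C * cmeA u 0 t := by
    have h := cme_A_hasSum u hu 0 t
    rw [← i0.hasSum_iff] at h
    · rw [besselI, ← (h.mul_left _).tsum_eq]
      congr 1
      ext k
      have hk := hM u hu k
      simp only [Function.comp, add_zero]
      rw [div_mul_eq_mul_div (t ^ (2 * k)), mul_div_assoc (t ^ (2 * k)), hk, Real.rpow_add ht2,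
        show (k : ℝ) + ((n : ℝ) / 2 - 1) + 1 = k + (n : ℝ) / 2 by ring,
        show 2 * (k : ℝ) = ((2 * k : ℕ) : ℝ) by push_cast; ring, Real.rpow_natCast, div_pow,
        pow_mul 2 2 k]
      have h2 : Real.Gamma (k + (n : ℝ) / 2) ≠ 0 := (Real.Gamma_pos_of_pos (by positivity)).ne'
      norm_num
      field_simp
    · intro m hm
      obtain ⟨k, rfl | rfl⟩ := Nat.even_or_odd' m
      · exact absurd ⟨k, rfl⟩ hm
      · rw [add_zero, cme_M_odd hn u hu, mul_zero]
  have B1 : besselI ((n : ℝ) / 2) t = (t / 2) ^ ((n : ℝ) / 2 - 1) / C * cmeA u 1 t := by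
    have h := cme_A_hasSum u hu 1 t
    rw [← i1.hasSum_iff] at h
    · rw [besselI, ← (h.mul_left _).tsum_eq]
      congr 1
      ext k
      have hk := hM u hu (k + 1)
      have h2 : Real.Gamma (k + (n : ℝ) / 2 + 1) ≠ 0 :=
        (Real.Gamma_pos_of_pos (by positivity)).ne'
      have e : ((k + 1 : ℕ) : ℝ) + (n : ℝ) / 2 = k + (n : ℝ) / 2 + 1 := by push_cast; ring
      rw [e, show 2 * (k + 1) = (2 * k + 1) + 1 by ring, Nat.factorial_succ (2 * k + 1),
        Nat.factorial_succ k] at hk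
      simp only [Function.comp]
      rw [show 2 * (k : ℝ) + (n : ℝ) / 2 = ((2 * k + 1 : ℕ) : ℝ) + ((n : ℝ) / 2 - 1) by
        push_cast; ring, Real.rpow_add ht2, Real.rpow_natCast, div_pow,
        pow_succ 2 (2 * k), pow_mul 2 2 k]
      have h6 : ((2 * k + 1).factorial : ℝ) ≠ 0 := by positivity
      have h7 : (k.factorial : ℝ) ≠ 0 := by positivity
      have h8 : cmeM u (2 * k + 1 + 1) = (2 * k + 1).factorial * C /
          (2 * 4 ^ k * k.factorial * Real.Gamma (k + (n : ℝ) / 2 + 1)) := by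
        push_cast at hk
        rw [pow_succ] at hk
        rw [div_eq_iff (by positivity)] at hk
        rw [hk]
        field_simp
        ring
      rw [h8]
      norm_num
      field_simp
    · intro m hm
      obtain ⟨k, rfl | rfl⟩ := Nat.even_or_odd' m
      · rw [cme_M_odd hn u hu, mul_zero]
      · exact absurd ⟨k, rfl⟩ hm
  rw [besselRatio, B0, B1, mul_div_mul_left]
  positivity

/-- Ratio of sphere integrals. -/
noncomputable def cmeH {n : ℕ} (u : EuclideanSpace ℝ (Fin n)) (t : ℝ) : ℝ :=
  cmeA u 1 t / cmeA u 0 t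

lemma cme_H_cont {n : ℕ} (hn : 0 < n) (u : EuclideanSpace ℝ (Fin n)) : Continuous (cmeH u) :=
  (cme_A_cont u 1).div (cme_A_cont u 0) fun t => (cme_A_pos hn u t).ne'

lemma cme_H_le {n : ℕ} (hn : 0 < n) (u : EuclideanSpace ℝ (Fin n)) (hu : ‖u‖ = 1) (t : ℝ) :
    |cmeH u t| ≤ 1 := by
  rw [cmeH, abs_div, abs_of_pos (cme_A_pos hn u t), div_le_one (cme_A_pos hn u t)]
  exact cme_A_le u hu t

/-- Difference whose Gaussian mean vanishes. -/
noncomputable def cmeG {n : ℕ} (u : EuclideanSpace ℝ (Fin n)) (R s : ℝ)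
    (y : EuclideanSpace ℝ (Fin n)) : ℝ :=
  cmeH u (‖y‖ * R / s) * (inner ℝ u y / ‖y‖) - cmeH u (‖y‖ * R / s) ^ 2

lemma cme_G_meas {n : ℕ} (hn : 0 < n) (u : EuclideanSpace ℝ (Fin n)) (R s : ℝ) :
    Measurable (cmeG u R s) := by
  have := (cme_H_cont hn u).measurable
  unfold cmeG
  fun_prop

lemma cme_G_le {n : ℕ} (hn : 0 < n) (u : EuclideanSpace ℝ (Fin n)) (hu : ‖u‖ = 1) (R s : ℝ)
    (y : EuclideanSpace ℝ (Fin n)) : ‖cmeG u R s y‖ ≤ 2 := by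
  have h1 := cme_H_le hn u hu (‖y‖ * R / s)
  have h2 : |inner ℝ u y / ‖y‖| ≤ 1 := by
    rw [abs_div, abs_norm]
    refine div_le_one_of_le₀ ?_ (norm_nonneg _)
    have := abs_real_inner_le_norm u y
    rwa [hu, one_mul] at this
  rw [cmeG, Real.norm_eq_abs]
  refine (abs_sub _ _).trans ?_
  rw [abs_mul, abs_pow]
  nlinarith [abs_nonneg (cmeH u (‖y‖ * R / s)), abs_nonneg (inner ℝ u y / ‖y‖)]

lemma cme_G_zero {n : ℕ} (hn : 0 < n) (u : EuclideanSpace ℝ (Fin n)) (hu : ‖u‖ = 1) (R s : ℝ)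
    (hs : 0 < s) :
    ∫ z, cmeG u R s (R • u + Real.sqrt s • WithLp.toLp 2 z)
      ∂(Measure.pi fun _ : Fin n => gaussianReal 0 1) = 0 := by
  have := cme_nontriv hn
  rw [cme_gauss_integral n (fun y => cmeG u R s (R • u + Real.sqrt s • y))]
  set K : EuclideanSpace ℝ (Fin n) → ℝ := fun w =>
    cmeG u R s w * Real.exp (-‖w - R • u‖ ^ 2 / (2 * s)) with hK
  have e1 : ∀ y : EuclideanSpace ℝ (Fin n),
      cmeG u R s (R • u + Real.sqrt s • y) * Real.exp (-‖y‖ ^ 2 / 2) =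
      (fun w => K (R • u + w)) (Real.sqrt s • y) := by
    intro y
    simp only [hK, add_sub_cancel_left, norm_smul, mul_pow, Real.norm_eq_abs, sq_abs,
      Real.sq_sqrt hs.le]
    congr 2
    field_simp
  rw [integral_congr_ae (Filter.Eventually.of_forall e1), 
    Measure.integral_comp_smul volume (fun w => K (R • u + w)) (Real.sqrt s),
    integral_add_left_eq_self K]
  have e2 : ∫ w, K w = 0 := by
    rw [cme_polar]
    by_cases hint : Integrable (fun p : Metric.sphere (0 : EuclideanSpace ℝ (Fin n)) 1 ×
        Set.Ioi (0 : ℝ) => K ((p.2 : ℝ) • (p.1 : EuclideanSpace ℝ (Fin n))))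
        ((volume : Measure (EuclideanSpace ℝ (Fin n))).toSphere.prod
        (.volumeIoiPow (Module.finrank ℝ (EuclideanSpace ℝ (Fin n)) - 1)))
    · rw [integral_prod_symm _ hint]
      refine integral_eq_zero_of_ae (Filter.Eventually.of_forall fun r => ?_)
      have hr : (0 : ℝ) < r := r.2
      set t : ℝ := r * R / s with ht
      have e3 : ∀ θ : Metric.sphere (0 : EuclideanSpace ℝ (Fin n)) 1,
          K ((r : ℝ) • (θ : EuclideanSpace ℝ (Fin n))) =
          Real.exp (-((r : ℝ) ^ 2 + R ^ 2) / (2 * s)) * (cmeH u t *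
            ((inner ℝ u (θ : EuclideanSpace ℝ (Fin n))) ^ 1 *
              Real.exp (t * inner ℝ u (θ : EuclideanSpace ℝ (Fin n)))) - cmeH u t ^ 2 *
            ((inner ℝ u (θ : EuclideanSpace ℝ (Fin n))) ^ 0 *
              Real.exp (t * inner ℝ u (θ : EuclideanSpace ℝ (Fin n))))) := by
        intro θ
        have h1 : ‖(θ : EuclideanSpace ℝ (Fin n))‖ = 1 := by simp
        have h2 : ‖(r : ℝ) • (θ : EuclideanSpace ℝ (Fin n))‖ = r := by
          rw [norm_smul, h1, mul_one, Real.norm_eq_abs, abs_of_pos hr]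
        have h3 : Real.exp (-‖(r : ℝ) • (θ : EuclideanSpace ℝ (Fin n)) - R • u‖ ^ 2 / (2 * s)) =
            Real.exp (-((r : ℝ) ^ 2 + R ^ 2) / (2 * s)) *
              Real.exp (t * inner ℝ u (θ : EuclideanSpace ℝ (Fin n))) := by
          rw [← Real.exp_add, norm_sub_sq_real, h2, norm_smul, hu, mul_one, Real.norm_eq_abs,
            sq_abs, inner_smul_left, inner_smul_right, real_inner_comm, ht]
          congr 1
          simp
          field_simp
          ring
        simp only [hK, cmeG]
        rw [h3, h2, inner_smul_right, mul_div_assoc, mul_div_cancel_left₀ _ hr.ne', ← mul_div_assoc,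
          ← ht]
        ring
      simp only [Pi.zero_apply]
      rw [integral_congr_ae (Filter.Eventually.of_forall e3), integral_const_mul,
        integral_sub, integral_const_mul, integral_const_mul]
      · change _ * (cmeH u t * cmeA u 1 t - cmeH u t ^ 2 * cmeA u 0 t) = 0
        have := (cme_A_pos hn u t).ne'
        rw [cmeH]
        field_simp
        ring
      · exact cme_intble _ (by fun_prop)
      · exact cme_intble _ (by fun_prop)
    · exact integral_undef hint
  rw [e2]
  simp

lemma cme_euclNorm {n : ℕ} (z : Fin n → ℝ) : euclNorm z = ‖WithLp.toLp 2 z‖ := by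
  rw [euclNorm, EuclideanSpace.norm_eq]
  simp

theorem conditional_mean_error (n : ℕ) (hn : 0 < n) (R s : ℝ) (hR : 0 < R) (hs : 0 < s)
    (x : Fin n → ℝ) (hx : euclNorm x = R) :
    (∫ z, (∑ i, (x i -
          (R * besselRatio ((n : ℝ) / 2)
              (euclNorm (fun j => x j + Real.sqrt s * z j) * R / s) /
            euclNorm (fun j => x j + Real.sqrt s * z j)) *
            (x i + Real.sqrt s * z i)) ^ 2) ∂(stdGaussian n)) =
      R ^ 2 - R ^ 2 * ∫ z, (besselRatio ((n : ℝ) / 2)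
          (euclNorm (fun j => x j + Real.sqrt s * z j) * R / s)) ^ 2 ∂(stdGaussian n) := by
  have hss : Real.sqrt s ≠ 0 := (Real.sqrt_pos.2 hs).ne'
  set γ : Measure (Fin n → ℝ) := Measure.pi fun _ : Fin n => gaussianReal 0 1 with hγ
  have hstd : (_root_.stdGaussian n) = γ := rfl
  rw [hstd]
  set X : EuclideanSpace ℝ (Fin n) := WithLp.toLp 2 x with hX
  have hXR : ‖X‖ = R := by rw [← hx, cme_euclNorm]
  set u : EuclideanSpace ℝ (Fin n) := R⁻¹ • X with hu'
  have hXu : R • u = X := by rw [hu', smul_smul, mul_inv_cancel₀ hR.ne', one_smul]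
  have hu : ‖u‖ = 1 := by
    rw [hu', norm_smul, hXR, norm_inv, Real.norm_eq_abs, abs_of_pos hR, inv_mul_cancel₀ hR.ne']
  clear_value u
  have hd : ∀ᵐ z ∂γ, R • u + Real.sqrt s • WithLp.toLp 2 z ≠ 0 := by
    have : Nonempty (Fin n) := ⟨⟨0, hn⟩⟩
    rw [hγ, cme_pi_density]
    refine (withDensity_absolutelyContinuous _ _).ae_le ?_
    have h0 : ∀ᵐ z : Fin n → ℝ, z ≠ (-(Real.sqrt s)⁻¹) • x := by
      rw [ae_iff]
      simp
    filter_upwards [h0] with z hz h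
    apply hz
    rw [hXu, hX, ← WithLp.toLp_smul, ← WithLp.toLp_add] at h
    have h' : x + Real.sqrt s • z = 0 := by
      have := congrArg (WithLp.ofLp) h
      simpa using this
    rw [neg_smul, ← smul_neg, ← eq_neg_of_add_eq_zero_right h', smul_smul, inv_mul_cancel₀ hss,
      one_smul]
  have hH := cme_H_cont hn u
  have hn1 : ∀ z : Fin n → ℝ, euclNorm (fun j => x j + Real.sqrt s * z j) =
      ‖R • u + Real.sqrt s • WithLp.toLp 2 z‖ := by
    intro z
    rw [cme_euclNorm, hXu, hX, ← WithLp.toLp_smul, ← WithLp.toLp_add]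
    rfl
  have hb : ∀ z : Fin n → ℝ, R • u + Real.sqrt s • WithLp.toLp 2 z ≠ 0 →
      besselRatio ((n : ℝ) / 2) (‖R • u + Real.sqrt s • WithLp.toLp 2 z‖ * R / s) =
      cmeH u (‖R • u + Real.sqrt s • WithLp.toLp 2 z‖ * R / s) := by
    intro z hz
    have := norm_pos_iff.2 hz
    exact cme_bessel_ratio hn u hu _ (by positivity)
  simp only [hn1]
  have e1 : ∫ z, besselRatio ((n : ℝ) / 2)
        (‖R • u + Real.sqrt s • WithLp.toLp 2 z‖ * R / s) ^ 2 ∂γ =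
      ∫ z, cmeH u (‖R • u + Real.sqrt s • WithLp.toLp 2 z‖ * R / s) ^ 2 ∂γ := by
    refine integral_congr_ae ?_
    filter_upwards [hd] with z hz
    rw [hb z hz]
  have e2 : ∀ᵐ z ∂γ, (∑ i, (x i -
          (R * besselRatio ((n : ℝ) / 2)
              (‖R • u + Real.sqrt s • WithLp.toLp 2 z‖ * R / s) /
            ‖R • u + Real.sqrt s • WithLp.toLp 2 z‖) *
            (x i + Real.sqrt s * z i)) ^ 2) =
      R ^ 2 - 2 * R ^ 2 * cmeG u R s (R • u + Real.sqrt s • WithLp.toLp 2 z) -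
        R ^ 2 * cmeH u (‖R • u + Real.sqrt s • WithLp.toLp 2 z‖ * R / s) ^ 2 := by
    filter_upwards [hd] with z hz
    rw [hb z hz, cmeG]
    set y := R • u + Real.sqrt s • WithLp.toLp 2 z with hy
    set h := cmeH u (‖y‖ * R / s)
    have hyi : ∀ i, x i + Real.sqrt s * z i = y i := by
      intro i
      rw [hy, hXu]
      simp [hX]
    have hny : ‖y‖ ≠ 0 := (norm_pos_iff.2 hz).ne'
    have h1 : (∑ i, (x i - (R * h / ‖y‖) * (x i + Real.sqrt s * z i)) ^ 2) =
        ‖R • u - (R * h / ‖y‖) • y‖ ^ 2 := by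
      rw [EuclideanSpace.norm_sq_eq, hXu]
      refine Finset.sum_congr rfl fun i _ => ?_
      rw [hyi]
      simp [hX]
    rw [h1, norm_sub_sq_real, norm_smul, norm_smul, hu, inner_smul_left, inner_smul_right,
      Real.norm_eq_abs, Real.norm_eq_abs, mul_one, mul_pow, sq_abs, sq_abs]
    simp only [conj_trivial]
    field_simp
    ring
  have hm : Measurable fun z : Fin n → ℝ => R • u + Real.sqrt s • (WithLp.toLp 2 z : EuclideanSpace ℝ (Fin n)) := by
    fun_prop
  have hp : IsProbabilityMeasure γ := by rw [hγ]; infer_instance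
  have i1 : Integrable (fun z => cmeG u R s (R • u + Real.sqrt s • WithLp.toLp 2 z)) γ :=
    Integrable.of_bound ((cme_G_meas hn u R s).comp hm).aestronglyMeasurable 2
      (Filter.Eventually.of_forall fun z => cme_G_le hn u hu R s _)
  have i2 : Integrable (fun z =>
      cmeH u (‖R • u + Real.sqrt s • WithLp.toLp 2 z‖ * R / s) ^ 2) γ := by
    refine Integrable.of_bound (C := 1) ?_ (Filter.Eventually.of_forall fun z => ?_)
    · have := hH.measurable
      exact Measurable.aestronglyMeasurable (by fun_prop)
    · rw [norm_pow]
      exact pow_le_one₀ (norm_nonneg _) (cme_H_le hn u hu _)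
  rw [e1, integral_congr_ae e2, integral_sub, integral_sub, integral_const_mul, integral_const_mul,
    cme_G_zero hn u hu R s hs]
  · simp
  · exact integrable_const _
  · exact i1.const_mul _
  · exact (integrable_const _).sub (i1.const_mul _)
  · exact i2.const_mul _
end
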